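/- Properties of the effective Hamiltonian. Assume (H1)–(H4) and let H̄(p,L) be the effective Hamiltonian of the ergodicity theorem. Then H̄ : ℝ^N×ℝ → ℝ is continuous and satisfies: (i) for every p ∈ ℝ^N, H̄(p,L) → +∞ as L → +∞ and H̄(p,L) → −∞ as L → −∞; (ii) for every p ∈ ℝ^N, L ↦ H̄(p,L) is non-decreasing on ℝ; (iii) if σ(τ,y)=σ(τ,−y) for all (τ,y), then H̄(p,L) = H̄(−p,L); (iv) if W'(−v) = −W'(v) for all v and σ(τ,−y) = −σ(τ,y) for all (τ,y), then H̄(p,−L) = −H̄(p,L). -/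

import Mathlib

/-!
The core is a quantitative comparison principle for viscosity sub- and supersolutions of
`∂_t w = I_s[w] + f(t, x, w)` (`comparison`): if the right-hand sides differ by at most
`η · logWeight`, where `logWeight x = 1 + log (1 + |x|²)`, plus terms controlled by a Lipschitz
condition, then on `[0, T]` the solutions differ by at most `exp (B T) · η · logWeight`, with `B`
independent of `η` and `T`. It is proved by doubling the variables (`doubling`). The logarithmic
weight is unbounded, so that it makes the maximum of the doubled function exist, and `I_s` maps it
to a bounded function for every `s ∈ (0,1)`, so that it costs only a constant in the exponent.

The properties of `H̄` follow by comparing solutions of cell problems. Monotonicity in `L` and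
uniqueness of the slope are immediate (`IsEffective.mono`, `IsEffective.eq_of_isCell`). Since `b = W'`
and `σ` are bounded by some `C`, the functions `(L ∓ 2C) t` are sub- and supersolutions, whence
`L - 2C ≤ H̄(p, L) ≤ L + 2C` and the limits at infinity. As `g` is even, `w(t, -y)` solves the cell
problem for `(-p, L)` and `σ(t, -y)`, while `-w` solves the one for `(-p, -L)` and `-b(-·)`, `-σ`;
with uniqueness this gives the two symmetries.

Continuity rests on finite-time stability (`IsEffective.upper`). Changing `(p, L)` to a nearby
`(p', L')` changes the right-hand side by a small constant on a large ball, and by at most a constant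
outside it, hence by at most `η · logWeight` everywhere; so `w'(T, ·) ≤ w(T, ·) + ε` on a unit cell.
The cell problem is invariant under integer translations in space up to integer constants
(`IsCell.shift`), which gives `w(t, y + k) ≤ w(t, y) + 1` for `k ∈ ℤ^N` (`IsCell.add_intVec_le`).
Therefore `w'(T, ·) ≤ n` on the whole space for some integer `n ≤ (H̄(p, L) + ε) T + O(1)`. Taking
`T` to be an integer, the function `w'(t + T, y) - n` solves the same cell problem, so
`w'(t + T, ·) ≤ w'(t, ·) + n`, and iterating, `H̄(p', L') ≤ n / T`. This is upper semicontinuity;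
lower semicontinuity is upper semicontinuity for the problem with `-b(-·)` and `-σ`.
-/

open MeasureTheory Filter Metric Set RealInnerProductSpace

noncomputable section

/-- `ℝ^N` as a Euclidean space. -/
abbrev EN (N : ℕ) := EuclideanSpace ℝ (Fin N)

/-- The singular kernel `g(z/|z|) |z|^{-N-2s}` of the anisotropic Lévy operator. -/
noncomputable def levyKernel (N : ℕ) (s : ℝ) (g : EN N → ℝ) (z : EN N) : ℝ :=
  g (‖z‖⁻¹ • z) * ‖z‖ ^ (-(N : ℝ) - 2 * s)

/-- `I^{1,r}[φ, x]`: integral over `|z| ≤ r` of the second order increment of `φ`. -/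
noncomputable def levyI1 (N : ℕ) (s : ℝ) (g : EN N → ℝ) (φ : EN N → ℝ) (r : ℝ) (x : EN N) : ℝ :=
  ∫ z in {z : EN N | ‖z‖ ≤ r}, (φ (x + z) - φ x - fderiv ℝ φ x z) * levyKernel N s g z

/-- `I^{2,r}[u, x]`: integral over `|z| > r` of the increment of `u`. -/
noncomputable def levyI2 (N : ℕ) (s : ℝ) (g : EN N → ℝ) (u : EN N → ℝ) (r : ℝ) (x : EN N) : ℝ :=
  ∫ z in {z : EN N | r < ‖z‖}, (u (x + z) - u x) * levyKernel N s g z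

/-- The anisotropic Lévy operator `I_s` of order `2s`, defined as a principal value. -/
noncomputable def levyOp (N : ℕ) (s : ℝ) (g : EN N → ℝ) (φ : EN N → ℝ) (x : EN N) : ℝ :=
  limUnder (nhdsWithin 0 (Ioi (0:ℝ)))
    (fun ρ => ∫ y in {y : EN N | ρ < ‖y‖}, (φ (x + y) - φ x) * levyKernel N s g y)

/-- (H1): `g` is continuous, positive on the sphere and even. -/
def H1 (N : ℕ) (g : EN N → ℝ) : Prop :=
  Continuous g ∧ (∀ z : EN N, ‖z‖ = 1 → 0 < g z) ∧ (∀ z : EN N, g (-z) = g z)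

/-- (H2): `W ∈ C^{1,1}(ℝ)` and `W(v+1) = W(v)`. -/
def H2 (W : ℝ → ℝ) : Prop :=
  ContDiff ℝ 1 W ∧ (∃ K : NNReal, LipschitzWith K (deriv W)) ∧ ∀ v, W (v + 1) = W v

/-- (H3): `σ ∈ C^{0,1}(ℝ⁺ × ℝ^N)`, 1-periodic in `t` and ℤ^N-periodic in `x`. -/
def H3 (N : ℕ) (σ : ℝ → EN N → ℝ) : Prop :=
  (∃ K : NNReal, LipschitzWith K (fun q : ℝ × EN N => σ q.1 q.2)) ∧
  (∀ t x, σ (t + 1) x = σ t x) ∧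
  (∀ (k : Fin N → ℤ) (t : ℝ) (x : EN N), σ t (x + (WithLp.equiv 2 (Fin N → ℝ)).symm (fun j => (k j : ℝ))) = σ t x)

/-- (H4): `u₀ ∈ W^{2,∞}(ℝ^N)`. -/
def H4 (N : ℕ) (u₀ : EN N → ℝ) : Prop :=
  ContDiff ℝ 2 u₀ ∧
  ∃ M, ∀ x, |u₀ x| ≤ M ∧ ‖fderiv ℝ u₀ x‖ ≤ M ∧ ‖fderiv ℝ (fderiv ℝ u₀) x‖ ≤ M

/-- Boundedness on `(0,T) × ℝ^N` for every `T > 0`. -/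
def LocBddPos (N : ℕ) (u : ℝ → EN N → ℝ) : Prop :=
  ∀ T > 0, ∃ M, ∀ t ∈ Ioc (0:ℝ) T, ∀ x, |u t x| ≤ M

/-- Viscosity subsolution of `∂_t u = F(t, x, u, ∇_x u, I_s[u(t,·)])` with initial datum `u₀`. -/
def IsSubsol (N : ℕ) (s : ℝ) (g : EN N → ℝ)
    (F : ℝ → EN N → ℝ → (EN N →L[ℝ] ℝ) → ℝ → ℝ)
    (u₀ : EN N → ℝ) (u : ℝ → EN N → ℝ) : Prop :=
  UpperSemicontinuousOn (fun q : ℝ × EN N => u q.1 q.2) (Ici 0 ×ˢ univ) ∧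
  LocBddPos N u ∧
  (∀ x, u 0 x ≤ u₀ x) ∧
  ∀ (t₀ : ℝ) (x₀ : EN N), 0 < t₀ →
    ∀ (φ : ℝ → EN N → ℝ), ContDiff ℝ 2 (fun q : ℝ × EN N => φ q.1 q.2) →
    ∀ τ r : ℝ, 0 < τ → τ < t₀ → 0 < r →
    (∀ t x, t ∈ Ioo (t₀ - τ) (t₀ + τ) → x ∈ ball x₀ r →
      u t x - φ t x ≤ u t₀ x₀ - φ t₀ x₀) →
    deriv (fun t => φ t x₀) t₀ -
      F t₀ x₀ (u t₀ x₀) (fderiv ℝ (fun x => φ t₀ x) x₀)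
        (levyI1 N s g (fun x => φ t₀ x) r x₀ + levyI2 N s g (fun x => u t₀ x) r x₀) ≤ 0

/-- Viscosity supersolution of `∂_t u = F(t, x, u, ∇_x u, I_s[u(t,·)])` with initial datum `u₀`. -/
def IsSupersol (N : ℕ) (s : ℝ) (g : EN N → ℝ)
    (F : ℝ → EN N → ℝ → (EN N →L[ℝ] ℝ) → ℝ → ℝ)
    (u₀ : EN N → ℝ) (u : ℝ → EN N → ℝ) : Prop :=
  LowerSemicontinuousOn (fun q : ℝ × EN N => u q.1 q.2) (Ici 0 ×ˢ univ) ∧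
  LocBddPos N u ∧
  (∀ x, u₀ x ≤ u 0 x) ∧
  ∀ (t₀ : ℝ) (x₀ : EN N), 0 < t₀ →
    ∀ (φ : ℝ → EN N → ℝ), ContDiff ℝ 2 (fun q : ℝ × EN N => φ q.1 q.2) →
    ∀ τ r : ℝ, 0 < τ → τ < t₀ → 0 < r →
    (∀ t x, t ∈ Ioo (t₀ - τ) (t₀ + τ) → x ∈ ball x₀ r →
      u t₀ x₀ - φ t₀ x₀ ≤ u t x - φ t x) →
    0 ≤ deriv (fun t => φ t x₀) t₀ -
      F t₀ x₀ (u t₀ x₀) (fderiv ℝ (fun x => φ t₀ x) x₀)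
        (levyI1 N s g (fun x => φ t₀ x) r x₀ + levyI2 N s g (fun x => u t₀ x) r x₀)

/-- Viscosity solution in `C_b(ℝ⁺ × ℝ^N)`. -/
def IsSol (N : ℕ) (s : ℝ) (g : EN N → ℝ)
    (F : ℝ → EN N → ℝ → (EN N →L[ℝ] ℝ) → ℝ → ℝ)
    (u₀ : EN N → ℝ) (u : ℝ → EN N → ℝ) : Prop :=
  ContinuousOn (fun q : ℝ × EN N => u q.1 q.2) (Ici 0 ×ˢ univ) ∧
  IsSubsol N s g F u₀ u ∧ IsSupersol N s g F u₀ u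

/-- The right-hand side of the cell problem
`∂_τ w = I_s[w(τ,·)] + L − W'(w + p·y) + σ(τ,y)`. -/
def cellF (N : ℕ) (W : ℝ → ℝ) (σ : ℝ → EN N → ℝ) (p : EN N) (L : ℝ) :
    ℝ → EN N → ℝ → (EN N →L[ℝ] ℝ) → ℝ → ℝ :=
  fun τ y v _ I => I + L - deriv W (v + ⟪p, y⟫) + σ τ y

/-- `w(τ,y)/τ → lam` as `τ → +∞`, locally uniformly in `y`. -/
def SlopeLim (N : ℕ) (w : ℝ → EN N → ℝ) (lam : ℝ) : Prop :=
  ∀ ε > 0, ∀ R > 0, ∃ T : ℝ, ∀ τ, T ≤ τ → ∀ y : EN N, ‖y‖ ≤ R → |w τ y / τ - lam| ≤ ε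

end

/-! ### Integrability of the kernel -/

lemma integrableOn_norm_rpow_small {N : ℕ} (hN : 1 ≤ N) {a : ℝ} (ha : -(N : ℝ) < a) :
    IntegrableOn (fun z : EN N => ‖z‖ ^ a) {z : EN N | ‖z‖ ≤ 1} := by
  have : Nonempty (Fin N) := ⟨⟨0, hN⟩⟩
  have hm : MeasurableSet {z : EN N | ‖z‖ ≤ 1} := measurableSet_le measurable_norm measurable_const
  rw [← integrable_indicator_iff hm]
  have h := (integrable_fun_norm_addHaar (volume : Measure (EN N))
    (f := (Iic (1:ℝ)).indicator (fun y : ℝ => y ^ a))).2 ?_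
  · exact h
  · have h1 : IntegrableOn (fun y : ℝ => y ^ ((N : ℝ) - 1 + a)) (Ioc 0 1) := by
      have := intervalIntegral.intervalIntegrable_rpow' (a := 0) (b := 1)
        (r := (N : ℝ) - 1 + a) (by linarith)
      exact (intervalIntegrable_iff_integrableOn_Ioc_of_le zero_le_one).1 this
    rw [← integrable_indicator_iff measurableSet_Ioc] at h1
    refine (h1.integrableOn (s := Ioi 0)).congr_fun (fun y (hy : 0 < y) => ?_) measurableSet_Ioi
    by_cases hy1 : y ≤ 1
    · have e : y ^ (N - 1) = y ^ ((N : ℝ) - 1) := by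
        rw [← Real.rpow_natCast]; congr 1; push_cast [Nat.cast_sub hN]; ring
      simp [hy, hy1, finrank_euclideanSpace, e, ← Real.rpow_add hy]
    · simp [hy1]

lemma integrableOn_norm_rpow_large {N : ℕ} (hN : 1 ≤ N) {a r : ℝ} (hr : 0 < r)
    (ha : a < -(N : ℝ)) :
    IntegrableOn (fun z : EN N => ‖z‖ ^ a) {z : EN N | r < ‖z‖} := by
  have : Nonempty (Fin N) := ⟨⟨0, hN⟩⟩
  have hm : MeasurableSet {z : EN N | r < ‖z‖} := measurableSet_lt measurable_const measurable_norm
  rw [← integrable_indicator_iff hm]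
  have h := (integrable_fun_norm_addHaar (volume : Measure (EN N))
    (f := (Ioi r).indicator (fun y : ℝ => y ^ a))).2 ?_
  · exact h
  · have h1 : IntegrableOn (fun y : ℝ => y ^ ((N : ℝ) - 1 + a)) (Ioi r) :=
      integrableOn_Ioi_rpow_of_lt (by linarith) hr
    rw [← integrable_indicator_iff measurableSet_Ioi] at h1
    refine (h1.integrableOn (s := Ioi 0)).congr_fun (fun y (hy : 0 < y) => ?_) measurableSet_Ioi
    by_cases hy1 : r < y
    · have e : y ^ (N - 1) = y ^ ((N : ℝ) - 1) := by
        rw [← Real.rpow_natCast]; congr 1; push_cast [Nat.cast_sub hN]; ring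
      simp [hy1, finrank_euclideanSpace, e, ← Real.rpow_add hy]
    · simp [hy1]

lemma levyKernel_nonneg {N : ℕ} {s : ℝ} (hs : s ∈ Ioo (0:ℝ) 1) {g : EN N → ℝ} (hg : H1 N g)
    (z : EN N) : 0 ≤ levyKernel N s g z := by
  unfold levyKernel
  by_cases hz : z = 0
  · have h0 : -(N : ℝ) - 2 * s ≠ 0 := by
      have := hs.1
      have : (0:ℝ) ≤ N := Nat.cast_nonneg N
      linarith
    simp [hz, Real.zero_rpow h0]
  · have : 0 < g (‖z‖⁻¹ • z) := hg.2.1 _ (by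
      rw [norm_smul, norm_inv, norm_norm, inv_mul_cancel₀ (norm_ne_zero_iff.2 hz)])
    positivity

lemma levyKernel_neg {N : ℕ} {s : ℝ} {g : EN N → ℝ} (hg : H1 N g) (z : EN N) :
    levyKernel N s g (-z) = levyKernel N s g z := by
  simp [levyKernel, hg.2.2]

lemma levyKernel_measurable {N : ℕ} {s : ℝ} {g : EN N → ℝ} (hg : H1 N g) :
    Measurable (levyKernel N s g) := by
  unfold levyKernel
  have h1 : Measurable fun z : EN N => ‖z‖⁻¹ • z := measurable_norm.inv.smul measurable_id
  exact (hg.1.measurable.comp h1).mul (measurable_norm.pow_const _)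

lemma levyKernel_le {N : ℕ} (s : ℝ) {g : EN N → ℝ} (hg : H1 N g) :
    ∃ G : ℝ, 0 ≤ G ∧ ∀ z : EN N, levyKernel N s g z ≤ G * ‖z‖ ^ (-(N : ℝ) - 2 * s) := by
  obtain ⟨G, hG⟩ := (isCompact_closedBall (0 : EN N) 1).exists_bound_of_continuousOn
    hg.1.continuousOn
  refine ⟨G, (norm_nonneg _).trans (hG 0 (by simp)), fun z => ?_⟩
  unfold levyKernel
  refine mul_le_mul_of_nonneg_right ?_ (by positivity)
  refine (le_abs_self _).trans (hG _ ?_)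
  rw [mem_closedBall_zero_iff, norm_smul, norm_inv, norm_norm]
  exact inv_mul_le_one

/-- Integrability of `h · kernel` from a power bound on `h`. -/
lemma integrableOn_mul_levyKernel {N : ℕ} {s : ℝ} (hs : s ∈ Ioo (0:ℝ) 1) {g : EN N → ℝ}
    (hg : H1 N g) {S : Set (EN N)} (hS : MeasurableSet S) {h : EN N → ℝ}
    (hm : AEStronglyMeasurable h (volume.restrict S)) {C a : ℝ}
    (hb : ∀ z ∈ S, |h z| ≤ C * ‖z‖ ^ a) (hz : ∀ z ∈ S, z = 0 → h z = 0)
    (hi : IntegrableOn (fun z : EN N => ‖z‖ ^ (a + (-(N : ℝ) - 2 * s))) S) :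
    IntegrableOn (fun z => h z * levyKernel N s g z) S := by
  obtain ⟨G, hG, hk⟩ := levyKernel_le s hg
  refine Integrable.mono' (hi.const_mul (|C| * G))
    (hm.mul (levyKernel_measurable hg).aestronglyMeasurable) ?_
  refine ae_restrict_of_forall_mem hS fun z hzS => ?_
  by_cases h0 : z = 0
  · rw [hz z hzS h0]; simp; positivity
  have hp : 0 < ‖z‖ := norm_pos_iff.2 h0
  rw [norm_mul, Real.norm_eq_abs, Real.norm_eq_abs, abs_of_nonneg (levyKernel_nonneg hs hg z),
    Real.rpow_add hp]
  calc |h z| * levyKernel N s g z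
      ≤ (|C| * ‖z‖ ^ a) * (G * ‖z‖ ^ (-(N : ℝ) - 2 * s)) := by
        refine mul_le_mul ((hb z hzS).trans ?_) (hk z) (levyKernel_nonneg hs hg z) (by positivity)
        exact mul_le_mul_of_nonneg_right (le_abs_self C) (by positivity)
    _ = _ := by ring

lemma measurableSet_normLe {N : ℕ} (r : ℝ) : MeasurableSet {z : EN N | ‖z‖ ≤ r} :=
  measurableSet_le measurable_norm measurable_const

lemma measurableSet_ltNorm {N : ℕ} (r : ℝ) : MeasurableSet {z : EN N | r < ‖z‖} :=
  measurableSet_lt measurable_const measurable_norm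

lemma integrableOn_sq_mul_levyKernel {N : ℕ} (hN : 1 ≤ N) {s : ℝ} (hs : s ∈ Ioo (0:ℝ) 1)
    {g : EN N → ℝ} (hg : H1 N g) :
    IntegrableOn (fun z => ‖z‖ ^ 2 * levyKernel N s g z) {z : EN N | ‖z‖ ≤ 1} := by
  refine integrableOn_mul_levyKernel hs hg (measurableSet_normLe 1) (C := 1) (a := 2)
    (by fun_prop) (fun z _ => ?_) (fun z _ h => by simp [h]) ?_
  · rw [abs_of_nonneg (by positivity)]; norm_num
  · exact integrableOn_norm_rpow_small hN (by linarith [hs.2])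

lemma integrableOn_levyKernel {N : ℕ} (hN : 1 ≤ N) {s : ℝ} (hs : s ∈ Ioo (0:ℝ) 1)
    {g : EN N → ℝ} (hg : H1 N g) {r : ℝ} (hr : 0 < r) :
    IntegrableOn (levyKernel N s g) {z : EN N | r < ‖z‖} := by
  have := integrableOn_mul_levyKernel hs hg (measurableSet_ltNorm r) (C := 1) (a := 0)
    (h := fun _ => 1) (by fun_prop) (fun z _ => by simp)
    (fun z hz h => absurd hz (by simp [h, hr.le]))
    (integrableOn_norm_rpow_large hN hr (by linarith [hs.1]))
  simpa using this

lemma integrableOn_log_mul_levyKernel {N : ℕ} (hN : 1 ≤ N) {s : ℝ} (hs : s ∈ Ioo (0:ℝ) 1)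
    {g : EN N → ℝ} (hg : H1 N g) :
    IntegrableOn (fun z => (Real.log 2 + Real.log (1 + ‖z‖ ^ 2)) * levyKernel N s g z)
      {z : EN N | 1 < ‖z‖} := by
  have hs0 := hs.1
  refine integrableOn_mul_levyKernel hs hg (measurableSet_ltNorm 1) (C := 4 ^ (s / 2) / (s / 2))
    (a := s) ?_ (fun z (hz : 1 < ‖z‖) => ?_)
    (fun z (hz : 1 < ‖z‖) h => absurd hz (by simp [h]))
    (integrableOn_norm_rpow_large hN one_pos (by linarith [hs.1]))
  · have : Measurable fun z : EN N => Real.log 2 + Real.log (1 + ‖z‖ ^ 2) := by fun_prop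
    exact this.aestronglyMeasurable
  · have h1 : 0 ≤ Real.log 2 := Real.log_nonneg (by norm_num)
    have h2 : 0 ≤ Real.log (1 + ‖z‖ ^ 2) := Real.log_nonneg (by nlinarith [sq_nonneg ‖z‖])
    rw [abs_of_nonneg (by positivity), ← Real.log_mul (by norm_num) (by positivity)]
    have h3 : 2 * (1 + ‖z‖ ^ 2) ≤ 4 * ‖z‖ ^ 2 := by nlinarith
    have h4 : (0:ℝ) < ‖z‖ := by linarith
    calc Real.log (2 * (1 + ‖z‖ ^ 2)) ≤ Real.log (4 * ‖z‖ ^ 2) :=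
          Real.log_le_log (by positivity) h3
      _ ≤ (4 * ‖z‖ ^ 2) ^ (s / 2) / (s / 2) := Real.log_le_rpow_div (by positivity) (by positivity)
      _ = 4 ^ (s / 2) / (s / 2) * ‖z‖ ^ s := by
          rw [Real.mul_rpow (by norm_num) (by positivity), ← Real.rpow_natCast,
            ← Real.rpow_mul h4.le]
          have : ((2:ℕ):ℝ) * (s / 2) = s := by push_cast; ring
          rw [this]; ring

lemma exists_small_sq_integral {N : ℕ} (hN : 1 ≤ N) {s : ℝ} (hs : s ∈ Ioo (0:ℝ) 1)
    {g : EN N → ℝ} (hg : H1 N g) {ε : ℝ} (hε : 0 < ε) :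
    ∃ r : ℝ, 0 < r ∧ r ≤ 1 ∧
      ∫ z in {z : EN N | ‖z‖ ≤ r}, ‖z‖ ^ 2 * levyKernel N s g z < ε := by
  have h := tendsto_setIntegral_of_antitone (μ := (volume : Measure (EN N)))
    (f := fun z => ‖z‖ ^ 2 * levyKernel N s g z)
    (s := fun n : ℕ => {z : EN N | ‖z‖ ≤ 1 / ((n : ℝ) + 1)}) (fun n => measurableSet_normLe _)
    (fun m n hmn z (hz : ‖z‖ ≤ 1 / ((n : ℝ) + 1)) => hz.trans (by
      have : (m : ℝ) ≤ n := by exact_mod_cast hmn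
      gcongr)) ⟨0, by simpa using integrableOn_sq_mul_levyKernel hN hs hg⟩
  have h0 : (⋂ n : ℕ, {z : EN N | ‖z‖ ≤ 1 / ((n : ℝ) + 1)}) ⊆ {0} := by
    intro z hz
    rw [mem_iInter] at hz
    have : ‖z‖ ≤ 0 := ge_of_tendsto' tendsto_one_div_add_atTop_nhds_zero_nat hz
    simpa using this
  have h1 : ∫ z in (⋂ n : ℕ, {z : EN N | ‖z‖ ≤ 1 / ((n : ℝ) + 1)}),
      ‖z‖ ^ 2 * levyKernel N s g z = 0 :=
    setIntegral_eq_zero_of_forall_eq_zero fun z hz => by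
      have : z = 0 := h0 hz
      simp [this]
  rw [h1] at h
  obtain ⟨n, hn⟩ := (h.eventually (gt_mem_nhds hε)).exists
  refine ⟨1 / ((n : ℝ) + 1), by positivity, ?_, hn⟩
  rw [div_le_one (by positivity)]; linarith [(Nat.cast_nonneg n : (0:ℝ) ≤ n)]

/-- Domination without integrability of the smaller function: a non-integrable function has
Bochner integral `0`. -/
lemma integral_le_of_le_nonneg {α : Type*} [MeasurableSpace α] {μ : Measure α} {S : Set α}
    (hS : MeasurableSet S) {f h : α → ℝ} (hh : IntegrableOn h S μ) (h0 : ∀ z ∈ S, 0 ≤ h z)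
    (hfh : ∀ z ∈ S, f z ≤ h z) : ∫ z in S, f z ∂μ ≤ ∫ z in S, h z ∂μ := by
  by_cases hf : IntegrableOn f S μ
  · exact setIntegral_mono_on hf hh hS hfh
  · rw [integral_undef hf]
    exact setIntegral_nonneg hS h0

/-! ### The logarithmic weight -/

/-- The weight `1 + log (1 + |x|²)`. It tends to infinity, which localises maxima, and it grows
slower than any power, so that the Lévy operator acts on it for every `s ∈ (0,1)`. -/
noncomputable def logWeight {N : ℕ} (x : EN N) : ℝ := 1 + Real.log (1 + ‖x‖ ^ 2)

lemma one_le_logWeight {N : ℕ} (x : EN N) : 1 ≤ logWeight x := by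
  have : 0 ≤ Real.log (1 + ‖x‖ ^ 2) := Real.log_nonneg (by nlinarith [sq_nonneg ‖x‖])
  unfold logWeight; linarith

lemma logWeight_le {N : ℕ} {x : EN N} {R : ℝ} (hx : ‖x‖ ≤ R) :
    logWeight x ≤ 1 + Real.log (1 + R ^ 2) := by
  unfold logWeight
  have := norm_nonneg x
  gcongr

lemma contDiff_logWeight {N : ℕ} : ContDiff ℝ 2 (logWeight : EN N → ℝ) := by
  unfold logWeight
  refine contDiff_const.add (ContDiff.log (contDiff_const.add (contDiff_norm_sq ℝ)) fun x => ?_)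
  positivity

lemma fderiv_logWeight {N : ℕ} (x z : EN N) :
    fderiv ℝ (logWeight : EN N → ℝ) x z = 2 * ⟪x, z⟫ / (1 + ‖x‖ ^ 2) := by
  have h1 : HasFDerivAt (fun x : EN N => 1 + ‖x‖ ^ 2) (2 • (innerSL ℝ x)) x :=
    (hasStrictFDerivAt_norm_sq x).hasFDerivAt.const_add 1
  have h2 : HasFDerivAt (logWeight : EN N → ℝ) _ x :=
    (h1.log (by positivity)).const_add 1
  rw [h2.fderiv]
  simp
  ring

lemma exists_lt_logWeight (N : ℕ) (C : ℝ) : ∃ R : ℝ, 0 < R ∧ ∀ x : EN N, R < ‖x‖ → C < logWeight x := by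
  refine ⟨Real.exp |C|, Real.exp_pos _, fun x hx => ?_⟩
  have h1 : 1 ≤ Real.exp |C| := Real.one_le_exp (abs_nonneg C)
  have h2 : |C| ≤ Real.log (1 + ‖x‖ ^ 2) := by
    rw [Real.le_log_iff_exp_le (by positivity)]
    nlinarith
  unfold logWeight
  linarith [le_abs_self C]

/-- Concavity of the logarithm: the second order increment of the weight is at most `|z|²`. -/
lemma logWeight_incr_le {N : ℕ} (x z : EN N) :
    logWeight (x + z) - logWeight x ≤ 2 * ⟪x, z⟫ / (1 + ‖x‖ ^ 2) + ‖z‖ ^ 2 := by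
  have ha : 0 < 1 + ‖x‖ ^ 2 := by positivity
  have hb : 0 < 1 + ‖x + z‖ ^ 2 := by positivity
  have h := Real.log_le_sub_one_of_pos (div_pos hb ha)
  rw [Real.log_div hb.ne' ha.ne'] at h
  have h2 : (1 + ‖x + z‖ ^ 2) / (1 + ‖x‖ ^ 2) - 1
      = 2 * ⟪x, z⟫ / (1 + ‖x‖ ^ 2) + ‖z‖ ^ 2 / (1 + ‖x‖ ^ 2) := by
    rw [norm_add_sq_real]; field_simp; ring
  have h3 : ‖z‖ ^ 2 / (1 + ‖x‖ ^ 2) ≤ ‖z‖ ^ 2 :=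
    div_le_self (by positivity) (by nlinarith [sq_nonneg ‖x‖])
  unfold logWeight
  linarith

/-- Peetre's inequality in logarithmic form. -/
lemma logWeight_incr_le_log {N : ℕ} (x z : EN N) :
    logWeight (x + z) - logWeight x ≤ Real.log 2 + Real.log (1 + ‖z‖ ^ 2) := by
  have h1 : 1 + ‖x + z‖ ^ 2 ≤ 2 * (1 + ‖z‖ ^ 2) * (1 + ‖x‖ ^ 2) := by
    have h := norm_add_le x z
    have h0 := norm_nonneg (x + z)
    have : ‖x + z‖ ^ 2 ≤ (‖x‖ + ‖z‖) ^ 2 := by gcongr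
    nlinarith [sq_nonneg (‖x‖ - ‖z‖), mul_nonneg (sq_nonneg ‖x‖) (sq_nonneg ‖z‖)]
  have h2 := Real.log_le_log (by positivity) h1
  rw [Real.log_mul (by positivity) (by positivity), Real.log_mul (by norm_num) (by positivity)] at h2
  unfold logWeight
  linarith

/-- An upper bound, uniform in the base point, for the Lévy operator acting on `logWeight`. -/
noncomputable def weightConst (N : ℕ) (s : ℝ) (g : EN N → ℝ) : ℝ :=
  (∫ z in {z : EN N | ‖z‖ ≤ 1}, ‖z‖ ^ 2 * levyKernel N s g z) +
  ∫ z in {z : EN N | 1 < ‖z‖}, (Real.log 2 + Real.log (1 + ‖z‖ ^ 2)) * levyKernel N s g z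

lemma log_two_add_nonneg {N : ℕ} (z : EN N) : 0 ≤ Real.log 2 + Real.log (1 + ‖z‖ ^ 2) := by
  have h1 : 0 ≤ Real.log 2 := Real.log_nonneg (by norm_num)
  have h2 : 0 ≤ Real.log (1 + ‖z‖ ^ 2) := Real.log_nonneg (by nlinarith [sq_nonneg ‖z‖])
  linarith

lemma weightConst_nonneg {N : ℕ} {s : ℝ} (hs : s ∈ Ioo (0:ℝ) 1)
    {g : EN N → ℝ} (hg : H1 N g) : 0 ≤ weightConst N s g := by
  refine add_nonneg (setIntegral_nonneg (measurableSet_normLe 1) fun z _ => ?_)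
    (setIntegral_nonneg (measurableSet_ltNorm 1) fun z _ => ?_)
  · exact mul_nonneg (by positivity) (levyKernel_nonneg hs hg z)
  · exact mul_nonneg (log_two_add_nonneg z) (levyKernel_nonneg hs hg z)

/-- The far part of the Lévy operator on the weight is bounded independently of `r`: on the
annulus `r < |z| ≤ 1` the first order term is odd, hence has integral `0`. -/
lemma integral_le_weightConst {N : ℕ} (hN : 1 ≤ N) {s : ℝ} (hs : s ∈ Ioo (0:ℝ) 1)
    {g : EN N → ℝ} (hg : H1 N g) {r η : ℝ} (hr : 0 < r) (hr1 : r ≤ 1) (hη : 0 ≤ η) (x : EN N)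
    {F : EN N → ℝ} (hF : IntegrableOn F {z | r < ‖z‖})
    (hFle : ∀ z, F z ≤ η * (logWeight (x + z) - logWeight x) * levyKernel N s g z) :
    ∫ z in {z | r < ‖z‖}, F z ≤ η * weightConst N s g := by
  set A : Set (EN N) := {z | r < ‖z‖ ∧ ‖z‖ ≤ 1} with hA
  have hAm : MeasurableSet A := (measurableSet_ltNorm r).inter (measurableSet_normLe 1)
  have hsplit : {z : EN N | r < ‖z‖} = A ∪ {z | 1 < ‖z‖} := by
    ext z
    simp only [hA, mem_ofPred_eq, mem_union]
    constructor
    · intro h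
      rcases le_or_gt ‖z‖ 1 with h1 | h1
      · exact Or.inl ⟨h, h1⟩
      · exact Or.inr h1
    · rintro (h | h)
      · exact h.1
      · linarith
  have hdisj : Disjoint A {z : EN N | 1 < ‖z‖} := by
    rw [Set.disjoint_left]
    rintro z ⟨_, h1⟩ (h2 : 1 < ‖z‖)
    linarith
  have hAr : A ⊆ {z | r < ‖z‖} := fun z hz => hz.1
  have hk := levyKernel_nonneg hs hg
  rw [hsplit, setIntegral_union hdisj (measurableSet_ltNorm 1) (hF.mono_set hAr)
    (hF.mono_set (fun z (hz : 1 < ‖z‖) => lt_of_le_of_lt hr1 hz))]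
  -- the odd first order term
  set c : EN N → ℝ := fun z => 2 * ⟪x, z⟫ / (1 + ‖x‖ ^ 2) with hc
  have hcm : Measurable c := by
    have : Continuous c := by
      refine Continuous.div_const ?_ _
      exact continuous_const.mul (continuous_const.inner continuous_id)
    exact this.measurable
  have hcint : IntegrableOn (fun z => c z * levyKernel N s g z) A := by
    refine Integrable.bdd_mul (c := 2 * ‖x‖ / (1 + ‖x‖ ^ 2))
      ((integrableOn_levyKernel hN hs hg hr).mono_set hAr) hcm.aestronglyMeasurable ?_
    refine ae_restrict_of_forall_mem hAm fun z hz => ?_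
    have h1 : |⟪x, z⟫| ≤ ‖x‖ * 1 := (abs_real_inner_le_norm x z).trans (by gcongr; exact hz.2)
    rw [Real.norm_eq_abs, abs_div, abs_mul, abs_of_pos (by positivity : 0 < 1 + ‖x‖ ^ 2), abs_two]
    gcongr
    linarith
  have hodd : ∫ z in A, c z * levyKernel N s g z = 0 := by
    have h1 : ∫ z in A, c z * levyKernel N s g z
        = ∫ z in A, -(c z * levyKernel N s g z) := by
      rw [← integral_indicator hAm, ← integral_indicator hAm, ← integral_neg_eq_self]
      congr 1
      ext z
      by_cases hz : z ∈ A
      · have hz' : -z ∈ A := by simpa [hA] using hz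
        rw [indicator_of_mem hz, indicator_of_mem hz', levyKernel_neg hg]
        simp only [hc, inner_neg_right]
        ring
      · have hz' : -z ∉ A := by simpa [hA] using hz
        rw [indicator_of_notMem hz, indicator_of_notMem hz']
    rw [integral_neg] at h1
    linarith
  have hsq : IntegrableOn (fun z => ‖z‖ ^ 2 * levyKernel N s g z) A :=
    (integrableOn_sq_mul_levyKernel hN hs hg).mono_set fun z hz => hz.2
  have h1 : ∫ z in A, F z ≤ η * ∫ z in {z : EN N | ‖z‖ ≤ 1}, ‖z‖ ^ 2 * levyKernel N s g z := by
    calc ∫ z in A, F z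
        ≤ ∫ z in A, (η * (c z * levyKernel N s g z) + η * (‖z‖ ^ 2 * levyKernel N s g z)) := by
          refine setIntegral_mono_on (hF.mono_set hAr)
            ((hcint.const_mul η).add (hsq.const_mul η)) hAm fun z _ => (hFle z).trans ?_
          have := mul_le_mul_of_nonneg_right
            (mul_le_mul_of_nonneg_left (logWeight_incr_le x z) hη) (hk z)
          simp only [hc]
          linarith
      _ = η * ∫ z in A, ‖z‖ ^ 2 * levyKernel N s g z := by
          rw [integral_add (hcint.const_mul η) (hsq.const_mul η), integral_const_mul,
            integral_const_mul, hodd]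
          ring
      _ ≤ _ := by
          refine mul_le_mul_of_nonneg_left ?_ hη
          refine setIntegral_mono_set (integrableOn_sq_mul_levyKernel hN hs hg) ?_ ?_
          · exact ae_of_all _ fun z => mul_nonneg (by positivity) (hk z)
          · exact LE.le.eventuallyLE (fun z hz => hz.2 : A ⊆ {z : EN N | ‖z‖ ≤ 1})
  have h2 : ∫ z in {z : EN N | 1 < ‖z‖}, F z ≤ η * ∫ z in {z : EN N | 1 < ‖z‖},
      (Real.log 2 + Real.log (1 + ‖z‖ ^ 2)) * levyKernel N s g z := by
    rw [← integral_const_mul]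
    refine integral_le_of_le_nonneg (measurableSet_ltNorm 1)
      ((integrableOn_log_mul_levyKernel hN hs hg).const_mul η) (fun z _ => ?_) fun z _ => ?_
    · exact mul_nonneg hη (mul_nonneg (log_two_add_nonneg z) (hk z))
    · refine (hFle z).trans ?_
      have := mul_le_mul_of_nonneg_right
            (mul_le_mul_of_nonneg_left (logWeight_incr_le_log x z) hη) (hk z)
      linarith
  unfold weightConst
  linarith

/-! ### Viscosity subsolutions of `∂_t w = I_s[w] + f(t, x, w)` -/

/-- Continuous, locally (in time) bounded viscosity subsolutions of `∂_t w = I_s[w] + f(t,x,w)`,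
without reference to an initial datum. Supersolutions `w` for `f` are encoded as subsolutions
`-w` for `negRHS f`. -/
def SubS (N : ℕ) (s : ℝ) (g : EN N → ℝ) (f : ℝ → EN N → ℝ → ℝ) (w : ℝ → EN N → ℝ) : Prop :=
  ContinuousOn (fun q : ℝ × EN N => w q.1 q.2) (Ici 0 ×ˢ univ) ∧
  (∀ T > 0, ∃ M, ∀ t ∈ Icc (0:ℝ) T, ∀ x, |w t x| ≤ M) ∧
  ∀ (t₀ : ℝ) (x₀ : EN N), 0 < t₀ →
    ∀ (φ : ℝ → EN N → ℝ), ContDiff ℝ 2 (fun q : ℝ × EN N => φ q.1 q.2) →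
    ∀ τ r : ℝ, 0 < τ → τ < t₀ → 0 < r →
    (∀ t x, t ∈ Ioo (t₀ - τ) (t₀ + τ) → x ∈ ball x₀ r →
      w t x - φ t x ≤ w t₀ x₀ - φ t₀ x₀) →
    deriv (fun t => φ t x₀) t₀ ≤
      levyI1 N s g (fun x => φ t₀ x) r x₀ + levyI2 N s g (fun x => w t₀ x) r x₀
        + f t₀ x₀ (w t₀ x₀)

/-- The right-hand side satisfied by `-w` when `w` satisfies the one given by `f`. -/
def negRHS {N : ℕ} (f : ℝ → EN N → ℝ → ℝ) : ℝ → EN N → ℝ → ℝ := fun t x v => -f t x (-v)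

lemma SubS.continuous_slice {N : ℕ} {s : ℝ} {g : EN N → ℝ} {f : ℝ → EN N → ℝ → ℝ}
    {w : ℝ → EN N → ℝ} (h : SubS N s g f w) {t : ℝ} (ht : 0 ≤ t) : Continuous (w t) := by
  have : ContinuousOn (w t) univ :=
    h.1.comp (f := fun x : EN N => (t, x)) (by fun_prop) (fun x _ => ⟨ht, mem_univ _⟩)
  exact continuousOn_univ.1 this

lemma SubS.integrableOn_incr {N : ℕ} (hN : 1 ≤ N) {s : ℝ} (hs : s ∈ Ioo (0:ℝ) 1)
    {g : EN N → ℝ} (hg : H1 N g) {f : ℝ → EN N → ℝ → ℝ}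
    {w : ℝ → EN N → ℝ} (h : SubS N s g f w) {t : ℝ} (ht : 0 ≤ t) (x : EN N) {r : ℝ} (hr : 0 < r) :
    IntegrableOn (fun z => (w t (x + z) - w t x) * levyKernel N s g z) {z : EN N | r < ‖z‖} := by
  obtain ⟨M, hM⟩ := h.2.1 (t + 1) (by linarith)
  refine Integrable.bdd_mul (c := M + M) (integrableOn_levyKernel hN hs hg hr) ?_ ?_
  · have := h.continuous_slice ht
    have : Continuous fun z => w t (x + z) - w t x := by fun_prop
    exact this.aestronglyMeasurable
  · refine ae_of_all _ fun z => ?_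
    have h1 := hM t ⟨ht, by linarith⟩ (x + z)
    have h2 := hM t ⟨ht, by linarith⟩ x
    exact (norm_sub_le _ _).trans (add_le_add h1 h2)

/-- The subsolution inequality for `e^{-Bt} w` tested with a function of the form `h(t) + q(x)`. -/
lemma SubS.scaled {N : ℕ} {s : ℝ} {g : EN N → ℝ} {f : ℝ → EN N → ℝ → ℝ}
    {w : ℝ → EN N → ℝ} (hw : SubS N s g f w) {T t₀ B : ℝ} {x₀ : EN N} (ht : 0 < t₀) (htT : t₀ < T)
    {h : ℝ → ℝ} (hh : ContDiff ℝ 2 h) {q : EN N → ℝ} (hq : ContDiff ℝ 2 q)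
    (hmax : ∀ t ∈ Ioo 0 T, ∀ x, Real.exp (-(B * t)) * w t x - h t - q x
      ≤ Real.exp (-(B * t₀)) * w t₀ x₀ - h t₀ - q x₀) {r : ℝ} (hr : 0 < r) :
    B * (Real.exp (-(B * t₀)) * w t₀ x₀) + deriv h t₀ ≤
      levyI1 N s g q r x₀ + Real.exp (-(B * t₀)) * levyI2 N s g (w t₀) r x₀
        + Real.exp (-(B * t₀)) * f t₀ x₀ (w t₀ x₀) := by
  set m := Real.exp (-(B * t₀)) * w t₀ x₀ - h t₀ - q x₀ with hm
  have hcancel : ∀ t, Real.exp (B * t) * Real.exp (-(B * t)) = 1 := fun t => by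
    rw [← Real.exp_add]; simp
  have key := hw.2.2 t₀ x₀ ht (fun t x => Real.exp (B * t) * (m + h t + q x)) (by fun_prop)
    (min (t₀ / 2) (T - t₀)) r (lt_min (by linarith) (by linarith))
    (lt_of_le_of_lt (min_le_left _ _) (by linarith)) hr ?_
  · have hd : deriv (fun t => Real.exp (B * t) * (m + h t + q x₀)) t₀
        = Real.exp (B * t₀) * (B * (m + h t₀ + q x₀) + deriv h t₀) := by
      have h1 : HasDerivAt h (deriv h t₀) t₀ := (hh.differentiable (by norm_num) t₀).hasDerivAt
      have h2 : HasDerivAt (fun t => Real.exp (B * t)) (Real.exp (B * t₀) * (B * 1)) t₀ :=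
        ((hasDerivAt_id t₀).const_mul B).exp
      have h3 := (h2.mul ((h1.const_add m).add_const (q x₀))).deriv
      have e : (fun t => Real.exp (B * t) * (m + h t + q x₀))
        = (fun t => Real.exp (B * t)) * (fun t => m + h t + q x₀) := rfl
      rw [e, h3]
      ring
    have hI : levyI1 N s g (fun x => Real.exp (B * t₀) * (m + h t₀ + q x)) r x₀
        = Real.exp (B * t₀) * levyI1 N s g q r x₀ := by
      unfold levyI1
      rw [← integral_const_mul]
      congr 1
      ext z
      have hq' := hq.differentiable (by norm_num) x₀
      rw [fderiv_const_mul (hq'.const_add _), fderiv_const_add]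
      simp
      ring
    rw [hd, hI] at key
    have key' := mul_le_mul_of_nonneg_left key (Real.exp_pos (-(B * t₀))).le
    have e1 : m + h t₀ + q x₀ = Real.exp (-(B * t₀)) * w t₀ x₀ := by rw [hm]; ring
    rw [e1] at key'
    have hc := hcancel t₀
    calc _ = Real.exp (-(B * t₀)) * (Real.exp (B * t₀) *
            (B * (Real.exp (-(B * t₀)) * w t₀ x₀) + deriv h t₀)) := by
            linear_combination -(B * (Real.exp (-(B * t₀)) * w t₀ x₀) + deriv h t₀) * hc
      _ ≤ _ := key'
      _ = (Real.exp (B * t₀) * Real.exp (-(B * t₀))) * levyI1 N s g q r x₀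
          + Real.exp (-(B * t₀)) * levyI2 N s g (w t₀) r x₀
          + Real.exp (-(B * t₀)) * f t₀ x₀ (w t₀ x₀) := by ring
      _ = _ := by rw [hc, one_mul]
  · intro t x hτ _
    have ht' : t ∈ Ioo 0 T := by
      have h1 := min_le_left (t₀ / 2) (T - t₀)
      have h2 := min_le_right (t₀ / 2) (T - t₀)
      exact ⟨by linarith [hτ.1], by linarith [hτ.2]⟩
    have h1 : Real.exp (-(B * t)) * w t x ≤ m + h t + q x := by linarith [hmax t ht' x]
    have h2 := mul_le_mul_of_nonneg_left h1 (Real.exp_pos (B * t)).le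
    rw [← mul_assoc, hcancel, one_mul] at h2
    have h3 : Real.exp (B * t₀) * (m + h t₀ + q x₀) = w t₀ x₀ := by
      have : m + h t₀ + q x₀ = Real.exp (-(B * t₀)) * w t₀ x₀ := by rw [hm]; ring
      rw [this, ← mul_assoc, hcancel, one_mul]
    linarith

/-! ### Comparison principle -/

/-- Doubling of variables. If `a + b ≤ 0` at time `0` but `a + b` exceeds `η · logWeight` somewhere
at time `T`, then the doubled function penalised by `n (|x-y|² + (t-τ)²)`, by the weight and by
exponentials in time has a global maximum on `[0, T+1]`, at interior times, with positive value
bounded below independently of how close the two points are required to be. -/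
lemma doubling {N : ℕ} {a b : ℝ × EN N → ℝ} {T M η : ℝ} (hT : 0 ≤ T) (hη : 0 < η)
    (ha : ContinuousOn a (Icc 0 (T + 1) ×ˢ univ)) (hb : ContinuousOn b (Icc 0 (T + 1) ×ˢ univ))
    (haM : ∀ t ∈ Icc 0 (T + 1), ∀ x, a (t, x) ≤ M) (hbM : ∀ t ∈ Icc 0 (T + 1), ∀ x, b (t, x) ≤ M)
    (h0 : ∀ x, a (0, x) + b (0, x) ≤ 0) {xs : EN N}
    (hxs : η * logWeight xs < a (T, xs) + b (T, xs)) :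
    ∃ γ > 0, ∃ ν > 0, ∃ Λ > 0, ∀ d > 0, ∃ n ≥ 0, ∃ t ∈ Ioo 0 (T + 1), ∃ τ ∈ Ioo 0 (T + 1),
      ∃ x y : EN N, ‖x - y‖ ≤ d ∧ |t - τ| ≤ d ∧
      γ + η * logWeight x ≤ a (t, x) + b (τ, y) ∧
      ∀ t' ∈ Icc 0 (T + 1), ∀ τ' ∈ Icc 0 (T + 1), ∀ x' y' : EN N,
        a (t', x') + b (τ', y') - n * (‖x' - y'‖ ^ 2 + (t' - τ') ^ 2) - η * logWeight x'
            - ν * (Real.exp (Λ * (t' - T)) + Real.exp (Λ * (τ' - T))) ≤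
        a (t, x) + b (τ, y) - n * (‖x - y‖ ^ 2 + (t - τ) ^ 2) - η * logWeight x
            - ν * (Real.exp (Λ * (t - T)) + Real.exp (Λ * (τ - T))) := by
  have hTmem : T ∈ Icc 0 (T + 1) := ⟨hT, by linarith⟩
  have hψ : ∀ x : EN N, 0 < η * logWeight x := fun x =>
    mul_pos hη (by linarith [one_le_logWeight x])
  have hM : 0 ≤ M := by
    linarith [haM T hTmem xs, hbM T hTmem xs, hψ xs]
  obtain ⟨γ, hγ⟩ : ∃ γ, γ = (a (T, xs) + b (T, xs) - η * logWeight xs) / 2 := ⟨_, rfl⟩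
  have hγ0 : 0 < γ := by rw [hγ]; linarith
  obtain ⟨ν, hν⟩ : ∃ ν, ν = γ / 2 := ⟨_, rfl⟩
  have hν0 : 0 < ν := by rw [hν]; linarith
  obtain ⟨Λ, hΛ⟩ : ∃ Λ, Λ = (2 * M + 1) / ν := ⟨_, rfl⟩
  have hΛ0 : 0 < Λ := by rw [hΛ]; positivity
  have hΛM : 2 * M + 1 < ν * Real.exp Λ := by
    have h1 : ν * Λ = 2 * M + 1 := by rw [hΛ]; field_simp
    have h2 := Real.add_one_lt_exp hΛ0.ne'
    nlinarith
  refine ⟨γ, hγ0, ν, hν0, Λ, hΛ0, fun d hd => ?_⟩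
  obtain ⟨R, hR0, hR⟩ := exists_lt_logWeight N (2 * M / η)
  set Q : Set (ℝ × EN N) := Icc 0 (T + 1) ×ˢ closedBall 0 (R + 1) with hQ
  have hQc : IsCompact Q := isCompact_Icc.prod (isCompact_closedBall _ _)
  have hQs : Q ⊆ Icc 0 (T + 1) ×ˢ univ := prod_mono_right (subset_univ _)
  have hau := hQc.uniformContinuousOn_of_continuous (ha.mono hQs)
  have hbu := hQc.uniformContinuousOn_of_continuous (hb.mono hQs)
  rw [Metric.uniformContinuousOn_iff] at hau hbu
  obtain ⟨d₁, hd₁, hau⟩ := hau γ hγ0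
  obtain ⟨d₂, hd₂, hbu⟩ := hbu γ hγ0
  obtain ⟨e, he0, hed, he1, hed₁, hed₂⟩ : ∃ e > 0, e ≤ d ∧ e ≤ 1 ∧ e < d₁ ∧ e < d₂ := by
    refine ⟨min (min d 1) (min (d₁ / 2) (d₂ / 2)), by positivity, ?_, ?_, ?_, ?_⟩
    · exact (min_le_left _ _).trans (min_le_left _ _)
    · exact (min_le_left _ _).trans (min_le_right _ _)
    · exact lt_of_le_of_lt ((min_le_right _ _).trans (min_le_left _ _)) (by linarith)
    · exact lt_of_le_of_lt ((min_le_right _ _).trans (min_le_right _ _)) (by linarith)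
  obtain ⟨n, hn⟩ : ∃ n, n = (2 * M + 1) / e ^ 2 := ⟨_, rfl⟩
  have hn0 : 0 < n := by rw [hn]; positivity
  have hne : n * e ^ 2 = 2 * M + 1 := by rw [hn]; field_simp
  set Φ : (ℝ × EN N) × (ℝ × EN N) → ℝ := fun p =>
    a p.1 + b p.2 - n * (‖p.1.2 - p.2.2‖ ^ 2 + (p.1.1 - p.2.1) ^ 2) - η * logWeight p.1.2
      - ν * (Real.exp (Λ * (p.1.1 - T)) + Real.exp (Λ * (p.2.1 - T))) with hΦ
  -- nonnegativity of the penalised function localises the point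
  have hloc : ∀ t ∈ Icc 0 (T + 1), ∀ τ ∈ Icc 0 (T + 1), ∀ x y : EN N, 0 ≤ Φ ((t, x), (τ, y)) →
      ‖x‖ ≤ R ∧ ‖x - y‖ ≤ e ∧ |t - τ| ≤ e ∧ t ≠ T + 1 ∧ τ ≠ T + 1 := by
    intro t ht τ hτ x y hp
    simp only [hΦ] at hp
    have ha' := haM t ht x
    have hb' := hbM τ hτ y
    have hw := hψ x
    have hp1 : 0 ≤ n * ‖x - y‖ ^ 2 := by positivity
    have hp2 : 0 ≤ n * (t - τ) ^ 2 := by positivity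
    have hp3 : 0 < ν * Real.exp (Λ * (t - T)) := by positivity
    have hp4 : 0 < ν * Real.exp (Λ * (τ - T)) := by positivity
    refine ⟨?_, ?_, ?_, ?_, ?_⟩
    · by_contra hx
      have := hR x (not_le.1 hx)
      rw [div_lt_iff₀ hη] at this
      linarith
    · by_contra hx
      have h1 : e ^ 2 < ‖x - y‖ ^ 2 := by have := not_le.1 hx; gcongr
      nlinarith
    · by_contra hx
      have h1 : e ^ 2 < |t - τ| ^ 2 := by have := not_le.1 hx; gcongr
      rw [sq_abs] at h1
      nlinarith
    · rintro rfl
      rw [show Λ * (T + 1 - T) = Λ by ring] at hp hp3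
      linarith
    · rintro rfl
      rw [show Λ * (T + 1 - T) = Λ by ring] at hp hp4
      linarith
  have hstar : γ ≤ Φ ((T, xs), (T, xs)) := by
    simp only [hΦ, sub_self, norm_zero, mul_zero, Real.exp_zero]
    rw [hν]
    linarith
  have hxsR : ‖xs‖ ≤ R := (hloc T hTmem T hTmem xs xs (by linarith)).1
  have hΦc : ContinuousOn Φ (Q ×ˢ Q) := by
    have h1 : ContinuousOn (fun p : (ℝ × EN N) × (ℝ × EN N) => a p.1) (Q ×ˢ Q) :=
      (ha.mono hQs).comp continuousOn_fst fun p hp => hp.1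
    have h2 : ContinuousOn (fun p : (ℝ × EN N) × (ℝ × EN N) => b p.2) (Q ×ˢ Q) :=
      (hb.mono hQs).comp continuousOn_snd fun p hp => hp.2
    have h3 : Continuous (logWeight : EN N → ℝ) := contDiff_logWeight.continuous
    have h4 : Continuous fun p : (ℝ × EN N) × (ℝ × EN N) =>
      n * (‖p.1.2 - p.2.2‖ ^ 2 + (p.1.1 - p.2.1) ^ 2) := by fun_prop
    have h5 : Continuous fun p : (ℝ × EN N) × (ℝ × EN N) => η * logWeight p.1.2 := by fun_prop
    have h6 : Continuous fun p : (ℝ × EN N) × (ℝ × EN N) =>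
      ν * (Real.exp (Λ * (p.1.1 - T)) + Real.exp (Λ * (p.2.1 - T))) := by fun_prop
    exact (((h1.add h2).sub h4.continuousOn).sub h5.continuousOn).sub h6.continuousOn
  have hsQ : (T, xs) ∈ Q := ⟨hTmem, by rw [mem_closedBall_zero_iff]; linarith⟩
  obtain ⟨⟨⟨t, x⟩, ⟨τ, y⟩⟩, ⟨⟨ht, hx⟩, ⟨hτ, hy⟩⟩, hmax⟩ :=
    (hQc.prod hQc).exists_isMaxOn ⟨((T, xs), (T, xs)), hsQ, hsQ⟩ hΦc
  have hmx : γ ≤ Φ ((t, x), (τ, y)) := hstar.trans (hmax (a := ((T, xs), (T, xs))) ⟨hsQ, hsQ⟩)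
  obtain ⟨hxR, hxy, htτ, htT, hτT⟩ := hloc t ht τ hτ x y (by linarith)
  have hab : γ + η * logWeight x ≤ a (t, x) + b (τ, y) := by
    simp only [hΦ] at hmx
    have hp1 : 0 ≤ n * (‖x - y‖ ^ 2 + (t - τ) ^ 2) := by positivity
    have hp3 : 0 < ν * (Real.exp (Λ * (t - T)) + Real.exp (Λ * (τ - T))) := by positivity
    linarith
  have hzero : (0:ℝ) ∈ Icc 0 (T + 1) := ⟨le_rfl, by linarith⟩
  have ht0 : t ≠ 0 := by
    rintro rfl
    have h1 := hbu (τ, y) ⟨hτ, hy⟩ (0, x) ⟨hzero, hx⟩ (by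
      rw [Prod.dist_eq, Real.dist_eq, dist_comm y x, dist_eq_norm, abs_sub_comm]
      exact max_lt (lt_of_le_of_lt htτ hed₂) (lt_of_le_of_lt hxy hed₂))
    rw [Real.dist_eq] at h1
    linarith [h0 x, (abs_lt.1 h1).2, hψ x]
  have hτ0 : τ ≠ 0 := by
    rintro rfl
    have h1 := hau (t, x) ⟨ht, hx⟩ (0, y) ⟨hzero, hy⟩ (by
      rw [Prod.dist_eq, Real.dist_eq, dist_eq_norm]
      exact max_lt (lt_of_le_of_lt htτ hed₁) (lt_of_le_of_lt hxy hed₁))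
    rw [Real.dist_eq] at h1
    linarith [h0 y, (abs_lt.1 h1).2, hψ x]
  refine ⟨n, hn0.le, t, ⟨lt_of_le_of_ne ht.1 (Ne.symm ht0), lt_of_le_of_ne ht.2 htT⟩,
    τ, ⟨lt_of_le_of_ne hτ.1 (Ne.symm hτ0), lt_of_le_of_ne hτ.2 hτT⟩, x, y,
    hxy.trans hed, htτ.trans hed, hab, fun t' ht' τ' hτ' x' y' => ?_⟩
  change Φ ((t', x'), (τ', y')) ≤ Φ ((t, x), (τ, y))
  by_cases hp : 0 ≤ Φ ((t', x'), (τ', y'))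
  · obtain ⟨h1, h2, -⟩ := hloc t' ht' τ' hτ' x' y' hp
    have h3 : ‖y'‖ ≤ R + 1 := by
      calc ‖y'‖ = ‖x' - (x' - y')‖ := by rw [sub_sub_cancel]
        _ ≤ ‖x'‖ + ‖x' - y'‖ := norm_sub_le _ _
        _ ≤ R + 1 := by linarith
    refine hmax (a := ((t', x'), (τ', y'))) ⟨⟨ht', ?_⟩, ⟨hτ', ?_⟩⟩
    · rw [mem_closedBall_zero_iff]; linarith
    · rw [mem_closedBall_zero_iff]; linarith
  · linarith

/-- The singular part of the Lévy operator on the spatial test functions of the doubling. -/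
lemma levyI1_test_le {N : ℕ} (hN : 1 ≤ N) {s : ℝ} (hs : s ∈ Ioo (0:ℝ) 1)
    {g : EN N → ℝ} (hg : H1 N g) {n η r : ℝ} (hn : 0 ≤ n) (hη : 0 ≤ η) (hr1 : r ≤ 1)
    (x y : EN N) :
    levyI1 N s g (fun x' => n * ‖x' - y‖ ^ 2 + η * logWeight x') r x
      ≤ (n + η) * ∫ z in {z : EN N | ‖z‖ ≤ r}, ‖z‖ ^ 2 * levyKernel N s g z := by
  unfold levyI1
  rw [← integral_const_mul]
  have hk := levyKernel_nonneg hs hg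
  refine integral_le_of_le_nonneg (measurableSet_normLe r) ?_ (fun z _ => ?_) (fun z _ => ?_)
  · exact ((integrableOn_sq_mul_levyKernel hN hs hg).mono_set
      (fun z (hz : ‖z‖ ≤ r) => hz.trans hr1)).const_mul _
  · exact mul_nonneg (by linarith) (mul_nonneg (by positivity) (hk z))
  · have h1 : HasFDerivAt (fun x' : EN N => ‖x' - y‖ ^ 2) (2 • (innerSL ℝ (x - y))) x := by
      have := ((hasFDerivAt_id x).sub_const y).norm_sq
      simpa using this
    have h2 : HasFDerivAt (logWeight : EN N → ℝ) (fderiv ℝ logWeight x) x :=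
      (contDiff_logWeight.differentiable (by norm_num) x).hasFDerivAt
    have h3 := ((h1.const_mul n).add (h2.const_mul η)).fderiv
    have e : (fun x' : EN N => n * ‖x' - y‖ ^ 2 + η * logWeight x')
      = (fun x' : EN N => n * ‖x' - y‖ ^ 2) + (fun x' : EN N => η * logWeight x') := rfl
    have h4 : fderiv ℝ (fun x' : EN N => n * ‖x' - y‖ ^ 2 + η * logWeight x') x z
        = n * (2 * ⟪x - y, z⟫) + η * (2 * ⟪x, z⟫ / (1 + ‖x‖ ^ 2)) := by
      rw [e, h3, ← fderiv_logWeight]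
      simp [inner_sub_left]
    rw [h4]
    have h5 : ‖x + z - y‖ ^ 2 = ‖x - y‖ ^ 2 + 2 * ⟪x - y, z⟫ + ‖z‖ ^ 2 := by
      rw [show x + z - y = (x - y) + z by abel, norm_add_sq_real]
    beta_reduce
    rw [h5, ← mul_assoc (n + η)]
    refine mul_le_mul_of_nonneg_right ?_ (hk z)
    have := mul_le_mul_of_nonneg_left (logWeight_incr_le x z) hη
    linarith

lemma abs_exp_sub_exp_le {B u v : ℝ} (hB : 0 ≤ B) (hu : 0 ≤ u) (huv : u ≤ v) :
    |Real.exp (-(B * u)) - Real.exp (-(B * v))| ≤ B * |u - v| := by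
  have h1 : Real.exp (-(B * v)) = Real.exp (-(B * u)) * Real.exp (-(B * (v - u))) := by
    rw [← Real.exp_add]; congr 1; ring
  have h2 := Real.add_one_le_exp (-(B * (v - u)))
  have h3 : Real.exp (-(B * u)) ≤ 1 := Real.exp_le_one_iff.2 (by
    have := mul_nonneg hB hu
    linarith)
  have h4 := Real.exp_pos (-(B * u))
  have h6 : 0 ≤ B * (v - u) := mul_nonneg hB (by linarith)
  have h5 : Real.exp (-(B * (v - u))) ≤ 1 := Real.exp_le_one_iff.2 (by linarith)
  rw [abs_sub_comm u v, abs_of_nonneg (by linarith : 0 ≤ v - u), h1, abs_of_nonneg (by nlinarith)]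
  nlinarith

set_option maxHeartbeats 1000000 in
/-- Quantitative comparison principle. The right-hand sides may differ by `η · logWeight`, and the
solutions then differ by at most an exponential factor times the same quantity. -/
theorem comparison {N : ℕ} (hN : 1 ≤ N) {s : ℝ} (hs : s ∈ Ioo (0:ℝ) 1)
    {g : EN N → ℝ} (hg : H1 N g) {f₁ f₂ : ℝ → EN N → ℝ → ℝ} {w₁ w₂ : ℝ → EN N → ℝ}
    {K C D η : ℝ} (hK : 0 ≤ K) (hC : 0 ≤ C) (hη : 0 < η)
    (hf : ∀ t x τ y v₁ v₂, f₁ t x v₁ - f₂ τ y v₂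
      ≤ K * |v₁ - v₂| + C * (‖x - y‖ + |t - τ|) + η * logWeight x)
    (hD : ∀ t x v, |f₂ t x v| ≤ D)
    (h₁ : SubS N s g f₁ w₁) (h₂ : SubS N s g (negRHS f₂) (fun t x => -w₂ t x))
    (h0 : ∀ x, w₁ 0 x ≤ w₂ 0 x) {T : ℝ} (hT : 0 ≤ T) (xs : EN N) :
    w₁ T xs - w₂ T xs ≤ Real.exp ((K + weightConst N s g + 1) * T) * (η * logWeight xs) := by
  by_contra hcon
  have hWC := weightConst_nonneg hs hg
  set B := K + weightConst N s g + 1 with hB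
  have hB0 : 0 < B := by linarith
  obtain ⟨M₁, hM₁⟩ := h₁.2.1 (T + 1) (by linarith)
  obtain ⟨M₂, hM₂⟩ := h₂.2.1 (T + 1) (by linarith)
  obtain ⟨M, hMM₁, hMM₂⟩ : ∃ M, M₁ ≤ M ∧ M₂ ≤ M := ⟨max M₁ M₂, le_max_left _ _, le_max_right _ _⟩
  have hTmem : T ∈ Icc 0 (T + 1) := ⟨hT, by linarith⟩
  have hM : 0 ≤ M := (abs_nonneg _).trans ((hM₁ T hTmem xs).trans hMM₁)
  have hD0 : 0 ≤ D := (abs_nonneg _).trans (hD 0 0 0)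
  have hexp1 : ∀ t : ℝ, 0 ≤ t → Real.exp (-(B * t)) ≤ 1 := fun t ht =>
    Real.exp_le_one_iff.2 (by have := mul_nonneg hB0.le ht; linarith)
  have hbd : ∀ t ∈ Icc 0 (T + 1), ∀ v : ℝ, |v| ≤ M → Real.exp (-(B * t)) * v ≤ M := by
    intro t ht v hv
    have h1 := hexp1 t ht.1
    have h2 := Real.exp_pos (-(B * t))
    calc Real.exp (-(B * t)) * v ≤ Real.exp (-(B * t)) * M :=
          mul_le_mul_of_nonneg_left ((le_abs_self v).trans hv) h2.le
      _ ≤ 1 * M := mul_le_mul_of_nonneg_right h1 hM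
      _ = M := one_mul M
  have hsub : Icc 0 (T + 1) ×ˢ (univ : Set (EN N)) ⊆ Ici 0 ×ˢ univ :=
    prod_mono_left fun t ht => ht.1
  have hec : Continuous fun q : ℝ × EN N => Real.exp (-(B * q.1)) := by fun_prop
  obtain ⟨γ, hγ, ν, hν, Λ, hΛ, hdoub⟩ := doubling (N := N)
    (a := fun q => Real.exp (-(B * q.1)) * w₁ q.1 q.2)
    (b := fun q => Real.exp (-(B * q.1)) * (-w₂ q.1 q.2)) (M := M) (xs := xs) hT hη
    (hec.continuousOn.mul (h₁.1.mono hsub)) (hec.continuousOn.mul (h₂.1.mono hsub))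
    (fun t ht x => hbd t ht _ ((hM₁ t ht x).trans hMM₁))
    (fun t ht x => hbd t ht _ ((hM₂ t ht x).trans hMM₂))
    (fun x => by simp only [mul_zero, neg_zero, Real.exp_zero]; linarith [h0 x]) (by
      have h1 := mul_lt_mul_of_pos_left (not_le.1 hcon) (Real.exp_pos (-(B * T)))
      rw [← mul_assoc, ← Real.exp_add, neg_add_cancel, Real.exp_zero, one_mul] at h1
      simp only
      linarith)
  obtain ⟨P, hP⟩ : ∃ P, P = 2 * C + B * (K * M + D) + 1 := ⟨_, rfl⟩
  have hKM := mul_nonneg hK hM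
  have hP0 : 0 < P := by rw [hP]; positivity
  obtain ⟨d, hd⟩ : ∃ d, d = γ / (4 * P) := ⟨_, rfl⟩
  have hd0 : 0 < d := by rw [hd]; positivity
  have hdP : P * d = γ / 4 := by rw [hd]; field_simp
  obtain ⟨n, hn, t, ht, τ, hτ, x, y, hxy, htτ, hval, hmax⟩ := hdoub d hd0
  simp only at hval hmax
  have htI : t ∈ Icc 0 (T + 1) := Ioo_subset_Icc_self ht
  have hτI : τ ∈ Icc 0 (T + 1) := Ioo_subset_Icc_self hτ
  obtain ⟨r, hr, hr1, hκ⟩ := exists_small_sq_integral hN hs hg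
    (ε := γ / (4 * (2 * n + η))) (by positivity)
  set κ := ∫ z in {z : EN N | ‖z‖ ≤ r}, ‖z‖ ^ 2 * levyKernel N s g z with hκd
  have hκ' : (2 * n + η) * κ < γ / 4 := by
    rw [lt_div_iff₀ (by positivity)] at hκ
    linarith
  have hlw := contDiff_logWeight (N := N)
  -- the two viscosity inequalities at the maximum point
  have hd₁ : deriv (fun t' => n * (t' - τ) ^ 2 + ν * Real.exp (Λ * (t' - T))) t
      = 2 * n * (t - τ) + ν * Λ * Real.exp (Λ * (t - T)) := by
    have e1 := (((hasDerivAt_id t).sub_const τ).pow 2).const_mul n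
    have e2 := ((((hasDerivAt_id t).sub_const T).const_mul Λ).exp).const_mul ν
    refine (e1.add e2).deriv.trans ?_
    simp
    ring
  have hd₂ : deriv (fun τ' => n * (t - τ') ^ 2 + ν * Real.exp (Λ * (τ' - T))) τ
      = -(2 * n * (t - τ)) + ν * Λ * Real.exp (Λ * (τ - T)) := by
    have e1 := (((hasDerivAt_id τ).const_sub t).pow 2).const_mul n
    have e2 := ((((hasDerivAt_id τ).sub_const T).const_mul Λ).exp).const_mul ν
    refine (e1.add e2).deriv.trans ?_
    simp
    ring
  have v₁ := h₁.scaled (B := B) (x₀ := x) ht.1 ht.2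
    (h := fun t' => n * (t' - τ) ^ 2 + ν * Real.exp (Λ * (t' - T))) (by fun_prop)
    (q := fun x' => n * ‖x' - y‖ ^ 2 + η * logWeight x')
    ((contDiff_const.mul ((contDiff_norm_sq ℝ).comp (contDiff_id.sub contDiff_const))).add
      (contDiff_const.mul hlw)) (fun t' ht' x' => by
      have := hmax t' (Ioo_subset_Icc_self ht') τ hτI x' y
      linarith) hr
  have v₂ := h₂.scaled (B := B) (x₀ := y) hτ.1 hτ.2
    (h := fun τ' => n * (t - τ') ^ 2 + ν * Real.exp (Λ * (τ' - T))) (by fun_prop)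
    (q := fun y' => n * ‖y' - x‖ ^ 2 + 0 * logWeight y')
    ((contDiff_const.mul ((contDiff_norm_sq ℝ).comp (contDiff_id.sub contDiff_const))).add
      (contDiff_const.mul hlw)) (fun τ' hτ' y' => by
      have := hmax t htI τ' (Ioo_subset_Icc_self hτ') x y'
      rw [norm_sub_rev y' x, norm_sub_rev y x]
      linarith) hr
  rw [hd₁] at v₁
  rw [hd₂] at v₂
  have hI₁ := levyI1_test_le hN hs hg hn hη.le hr1 x y
  have hI₂ := levyI1_test_le hN hs hg hn le_rfl hr1 y x
  rw [← hκd] at hI₁ hI₂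
  -- the nonsingular parts, compared by translating both points by the same vector
  have hI2 : Real.exp (-(B * t)) * levyI2 N s g (w₁ t) r x
      + Real.exp (-(B * τ)) * levyI2 N s g (fun y => -w₂ τ y) r y ≤ η * weightConst N s g := by
    have i₁ := (h₁.integrableOn_incr hN hs hg htI.1 x hr).const_mul (Real.exp (-(B * t)))
    have i₂ := (h₂.integrableOn_incr hN hs hg hτI.1 y hr).const_mul (Real.exp (-(B * τ)))
    unfold levyI2
    rw [← integral_const_mul, ← integral_const_mul, ← integral_add i₁ i₂]
    refine integral_le_weightConst hN hs hg hr hr1 hη.le x (i₁.add i₂) fun z => ?_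
    have h1 := hmax t htI τ hτI (x + z) (y + z)
    rw [add_sub_add_right_eq_sub] at h1
    have h2 : Real.exp (-(B * t)) * (w₁ t (x + z) - w₁ t x)
        + Real.exp (-(B * τ)) * (-w₂ τ (y + z) - -w₂ τ y)
        ≤ η * (logWeight (x + z) - logWeight x) := by linarith
    have h3 := mul_le_mul_of_nonneg_right h2 (levyKernel_nonneg hs hg z)
    linarith
  -- Lipschitz bounds for the zeroth order terms
  set E₁ := Real.exp (-(B * t)) with hE₁
  set E₂ := Real.exp (-(B * τ)) with hE₂
  have hE₁0 : 0 < E₁ := Real.exp_pos _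
  have hE₁1 : E₁ ≤ 1 := hexp1 t htI.1
  have hEE : |E₁ - E₂| ≤ B * |t - τ| := by
    rcases le_total t τ with h | h
    · exact abs_exp_sub_exp_le hB0.le htI.1 h
    · rw [abs_sub_comm E₁ E₂, abs_sub_comm t τ]
      exact abs_exp_sub_exp_le hB0.le hτI.1 h
  set u₁ := w₁ t x with hu₁
  set u₂ := w₂ τ y with hu₂
  have hu₂M : |u₂| ≤ M := by
    have := (hM₂ τ hτI y).trans hMM₂
    rwa [abs_neg] at this
  set Δ := E₁ * u₁ + E₂ * (-u₂) with hΔ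
  have hΔ0 : 0 < Δ := by
    have := mul_pos hη (by linarith [one_le_logWeight x] : 0 < logWeight x)
    linarith
  have hdiff : E₁ * |u₁ - u₂| ≤ Δ + B * |t - τ| * M := by
    have e : E₁ * |u₁ - u₂| = |Δ - (E₁ - E₂) * u₂| := by
      rw [← abs_of_pos hE₁0, ← abs_mul, abs_of_pos hE₁0]; congr 1; rw [hΔ]; ring
    rw [e]
    refine (abs_sub _ _).trans ?_
    rw [abs_of_pos hΔ0, abs_mul]
    have := mul_le_mul hEE hu₂M (abs_nonneg _) (by positivity)
    linarith
  have hrhs : E₁ * f₁ t x u₁ - E₂ * f₂ τ y u₂ ≤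
      K * Δ + B * |t - τ| * (K * M + D) + C * (‖x - y‖ + |t - τ|) + η * logWeight x := by
    have e1 := mul_le_mul_of_nonneg_left (hf t x τ y u₁ u₂) hE₁0.le
    have e2 : (E₁ - E₂) * f₂ τ y u₂ ≤ B * |t - τ| * D := by
      refine (le_abs_self _).trans ?_
      rw [abs_mul]
      exact mul_le_mul hEE (hD _ _ _) (abs_nonneg _) (by positivity)
    have e3 := mul_le_mul_of_nonneg_left hdiff hK
    have hp : 0 ≤ C * (‖x - y‖ + |t - τ|) + η * logWeight x := by
      have := one_le_logWeight x
      positivity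
    have e4 : E₁ * (C * (‖x - y‖ + |t - τ|) + η * logWeight x)
        ≤ C * (‖x - y‖ + |t - τ|) + η * logWeight x := mul_le_of_le_one_left hp hE₁1
    linarith
  have herr : B * |t - τ| * (K * M + D) + C * (‖x - y‖ + |t - τ|) ≤ γ / 4 := by
    rw [← hdP, hP]
    have e1 : B * |t - τ| * (K * M + D) ≤ B * d * (K * M + D) := by gcongr
    have e2 : C * (‖x - y‖ + |t - τ|) ≤ C * (d + d) := by gcongr
    linarith
  have hneg : negRHS f₂ τ y (-u₂) = -f₂ τ y u₂ := by simp [negRHS]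
  rw [hneg] at v₂
  have hpos₁ : 0 < ν * Λ * Real.exp (Λ * (t - T)) := by positivity
  have hpos₂ : 0 < ν * Λ * Real.exp (Λ * (τ - T)) := by positivity
  have hfin : B * Δ ≤ (2 * n + η) * κ + η * weightConst N s g
      + (E₁ * f₁ t x u₁ - E₂ * f₂ τ y u₂) := by
    rw [hΔ]; linarith
  have h5 : (weightConst N s g + 1) * (γ + η * logWeight x) ≤ (weightConst N s g + 1) * Δ :=
    mul_le_mul_of_nonneg_left hval (by linarith)
  have h6 : η * weightConst N s g * 1 ≤ η * weightConst N s g * logWeight x :=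
    mul_le_mul_of_nonneg_left (one_le_logWeight x) (by positivity)
  have h7 : 0 ≤ weightConst N s g * γ := by positivity
  have h8 : B * Δ = K * Δ + (weightConst N s g + 1) * Δ := by rw [hB]; ring
  linarith

/-- Qualitative comparison principle. -/
theorem comparison_le {N : ℕ} (hN : 1 ≤ N) {s : ℝ} (hs : s ∈ Ioo (0:ℝ) 1)
    {g : EN N → ℝ} (hg : H1 N g) {f₁ f₂ : ℝ → EN N → ℝ → ℝ} {w₁ w₂ : ℝ → EN N → ℝ}
    {K C D : ℝ} (hK : 0 ≤ K) (hC : 0 ≤ C)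
    (hf : ∀ t x τ y v₁ v₂, f₁ t x v₁ - f₂ τ y v₂ ≤ K * |v₁ - v₂| + C * (‖x - y‖ + |t - τ|))
    (hD : ∀ t x v, |f₂ t x v| ≤ D)
    (h₁ : SubS N s g f₁ w₁) (h₂ : SubS N s g (negRHS f₂) (fun t x => -w₂ t x))
    (h0 : ∀ x, w₁ 0 x ≤ w₂ 0 x) {T : ℝ} (hT : 0 ≤ T) (x : EN N) : w₁ T x ≤ w₂ T x := by
  refine le_of_forall_pos_le_add fun ε hε => ?_
  have hx : 0 < logWeight x := by linarith [one_le_logWeight x]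
  set E := Real.exp ((K + weightConst N s g + 1) * T) with hE
  have hE0 : 0 < E := Real.exp_pos _
  have h := comparison hN hs hg hK hC (η := ε / (E * logWeight x)) (by positivity)
    (fun t x' τ y v₁ v₂ => (hf t x' τ y v₁ v₂).trans (by
      have : 0 ≤ ε / (E * logWeight x) * logWeight x' := by
        have := one_le_logWeight x'
        positivity
      linarith)) hD h₁ h₂ h0 hT x
  rw [← hE] at h
  have e : E * (ε / (E * logWeight x) * logWeight x) = ε := by field_simp
  rw [e] at h
  linarith

/-! ### Invariances of the equation -/

lemma levyI1_neg {N : ℕ} {s : ℝ} {g : EN N → ℝ} (φ : EN N → ℝ) (r : ℝ) (x : EN N) :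
    levyI1 N s g (fun y => -φ y) r x = -levyI1 N s g φ r x := by
  unfold levyI1
  rw [← integral_neg]
  congr 1
  ext z
  have : fderiv ℝ (fun y => -φ y) x = -fderiv ℝ φ x := fderiv_fun_neg
  rw [this]
  simp
  ring

lemma levyI2_neg {N : ℕ} {s : ℝ} {g : EN N → ℝ} (u : EN N → ℝ) (r : ℝ) (x : EN N) :
    levyI2 N s g (fun y => -u y) r x = -levyI2 N s g u r x := by
  unfold levyI2
  rw [← integral_neg]
  congr 1
  ext z
  ring

lemma SubS.translate {N : ℕ} {s : ℝ} {g : EN N → ℝ} {f : ℝ → EN N → ℝ → ℝ}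
    {w : ℝ → EN N → ℝ} (h : SubS N s g f w) {T : ℝ} (hT : 0 ≤ T) (k : EN N) (c : ℝ) :
    SubS N s g (fun t y v => f (t + T) (y + k) (v - c)) (fun t y => w (t + T) (y + k) + c) := by
  refine ⟨?_, fun S hS => ?_, ?_⟩
  · refine ContinuousOn.add ?_ continuousOn_const
    refine h.1.comp (f := fun q : ℝ × EN N => (q.1 + T, q.2 + k)) (by fun_prop) ?_
    rintro ⟨t, y⟩ ⟨ht, -⟩
    exact ⟨add_nonneg ht hT, mem_univ _⟩
  · obtain ⟨M, hM⟩ := h.2.1 (S + T) (by linarith)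
    refine ⟨M + |c|, fun t ht x => (abs_add_le _ _).trans ?_⟩
    have := hM (t + T) ⟨by linarith [ht.1], by linarith [ht.2]⟩ (x + k)
    linarith
  · intro t₀ x₀ ht₀ φ hφ τ r hτ hτt hr hmax
    have key := h.2.2 (t₀ + T) (x₀ + k) (by linarith) (fun t x => φ (t - T) (x - k))
      (hφ.comp (f := fun q : ℝ × EN N => (q.1 - T, q.2 - k))
        (g := fun q : ℝ × EN N => φ q.1 q.2) (by fun_prop)) τ r hτ (by linarith) hr ?_
    · have e1 : deriv (fun t => φ (t - T) (x₀ + k - k)) (t₀ + T) = deriv (fun t => φ t x₀) t₀ := by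
        rw [deriv_comp_sub_const (f := fun t => φ t (x₀ + k - k))]
        simp
      have e2 : levyI1 N s g (fun x => φ (t₀ + T - T) (x - k)) r (x₀ + k)
          = levyI1 N s g (fun x => φ t₀ x) r x₀ := by
        unfold levyI1
        congr 1
        ext z
        rw [fderiv_comp_sub (f := fun x => φ (t₀ + T - T) x)]
        simp [show x₀ + k + z - k = x₀ + z by abel]
      have e3 : levyI2 N s g (fun y => w (t₀ + T) (y + k) + c) r x₀
          = levyI2 N s g (fun x => w (t₀ + T) x) r (x₀ + k) := by
        unfold levyI2
        congr 1
        ext z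
        beta_reduce
        rw [show x₀ + z + k = x₀ + k + z by abel]
        ring
      rw [e1, e2] at key
      rw [e3]
      simpa using key
    · intro t x ht hx
      have := hmax (t - T) (x - k) ⟨by linarith [ht.1], by linarith [ht.2]⟩ (by
        rw [mem_ball, dist_eq_norm] at hx ⊢
        rwa [show x - k - x₀ = x - (x₀ + k) by abel])
      simp only [sub_add_cancel, add_sub_cancel_right] at this ⊢
      linarith

lemma SubS.reflect {N : ℕ} {s : ℝ} {g : EN N → ℝ} (hg : H1 N g) {f : ℝ → EN N → ℝ → ℝ}
    {w : ℝ → EN N → ℝ} (h : SubS N s g f w) :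
    SubS N s g (fun t y v => f t (-y) v) (fun t y => w t (-y)) := by
  refine ⟨?_, fun S hS => ?_, ?_⟩
  · refine h.1.comp (f := fun q : ℝ × EN N => (q.1, -q.2)) (by fun_prop) ?_
    rintro ⟨t, y⟩ ⟨ht, -⟩
    exact ⟨ht, mem_univ _⟩
  · obtain ⟨M, hM⟩ := h.2.1 S hS
    exact ⟨M, fun t ht x => hM t ht (-x)⟩
  · intro t₀ x₀ ht₀ φ hφ τ r hτ hτt hr hmax
    have key := h.2.2 t₀ (-x₀) ht₀ (fun t x => φ t (-x))
      (hφ.comp (f := fun q : ℝ × EN N => (q.1, -q.2))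
        (g := fun q : ℝ × EN N => φ q.1 q.2) (by fun_prop)) τ r hτ (by linarith) hr ?_
    · have e1 : fderiv ℝ (fun x => φ t₀ (-x)) (-x₀) = -fderiv ℝ (fun x => φ t₀ x) x₀ := by
        have h1 := fderiv_comp_smul (𝕜 := ℝ) (f := fun x : EN N => φ t₀ x) (x := -x₀) (-1)
        simpa using h1
      have e2 : levyI1 N s g (fun x => φ t₀ (-x)) r (-x₀)
          = levyI1 N s g (fun x => φ t₀ x) r x₀ := by
        unfold levyI1
        rw [← integral_indicator (measurableSet_normLe r),
          ← integral_indicator (measurableSet_normLe r), ← integral_neg_eq_self]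
        congr 1
        ext z
        by_cases hz : ‖z‖ ≤ r
        · rw [indicator_of_mem (by simpa using hz), indicator_of_mem (by simpa using hz),
            e1, levyKernel_neg hg]
          simp [add_comm]
        · rw [indicator_of_notMem (by simpa using hz), indicator_of_notMem (by simpa using hz)]
      have e3 : levyI2 N s g (fun y => w t₀ (-y)) r x₀
          = levyI2 N s g (fun x => w t₀ x) r (-x₀) := by
        unfold levyI2
        rw [← integral_indicator (measurableSet_ltNorm r),
          ← integral_indicator (measurableSet_ltNorm r), ← integral_neg_eq_self]
        congr 1
        ext z
        by_cases hz : r < ‖z‖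
        · rw [indicator_of_mem (by simpa using hz), indicator_of_mem (by simpa using hz),
            levyKernel_neg hg]
          simp [add_comm]
        · rw [indicator_of_notMem (by simpa using hz), indicator_of_notMem (by simpa using hz)]
      rw [e2] at key
      rw [e3]
      simpa using key
    · intro t x ht hx
      have := hmax t (-x) ht (by
        rw [mem_ball, dist_eq_norm] at hx ⊢
        rwa [← norm_neg, show -(-x - x₀) = x - -x₀ by abel])
      simpa using this

/-- The affine function `c t` solves `∂_t w = I_s[w] + c`. -/
lemma subS_linear {N : ℕ} {s : ℝ} (hs : s ∈ Ioo (0:ℝ) 1) {g : EN N → ℝ} (hg : H1 N g) (c : ℝ) :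
    SubS N s g (fun _ _ _ => c) (fun t _ => c * t) := by
  refine ⟨by fun_prop, fun S hS => ⟨|c| * S, fun t ht x => ?_⟩, ?_⟩
  · rw [abs_mul, abs_of_nonneg ht.1]
    exact mul_le_mul_of_nonneg_left ht.2 (abs_nonneg c)
  · intro t₀ x₀ ht₀ φ hφ τ r hτ hτt hr hmax
    have hd : DifferentiableAt ℝ (fun t => φ t x₀) t₀ := by
      have : ContDiff ℝ 2 (fun t => φ t x₀) :=
        hφ.comp (f := fun t : ℝ => (t, x₀)) (g := fun q : ℝ × EN N => φ q.1 q.2) (by fun_prop)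
      exact this.differentiable (by norm_num) t₀
    have hφc : Continuous (fun x => φ t₀ x) :=
      hφ.continuous.comp (f := fun x : EN N => (t₀, x)) (by fun_prop)
    have hmt : IsLocalMax (fun t => c * t - φ t x₀) t₀ := by
      filter_upwards [Ioo_mem_nhds (show t₀ - τ < t₀ by linarith) (show t₀ < t₀ + τ by linarith)]
        with t ht
      exact hmax t x₀ ht (mem_ball_self hr)
    have h1 : deriv (fun t => φ t x₀) t₀ = c := by
      have h2 := hmt.hasDerivAt_eq_zero (((hasDerivAt_id t₀).const_mul c).sub hd.hasDerivAt)
      linarith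
    have hmx : ∀ x ∈ ball x₀ r, φ t₀ x₀ ≤ φ t₀ x := fun x hx => by
      have := hmax t₀ x ⟨by linarith, by linarith⟩ hx
      linarith
    have h2 : fderiv ℝ (fun x => φ t₀ x) x₀ = 0 := by
      have : IsLocalMin (fun x => φ t₀ x) x₀ := by
        filter_upwards [ball_mem_nhds x₀ hr] with x hx using hmx x hx
      exact this.fderiv_eq_zero
    -- the test cylinder is open, the singular integral runs over the closed ball
    have hmx' : ∀ x ∈ closedBall x₀ r, φ t₀ x₀ ≤ φ t₀ x := by
      rw [← closure_ball x₀ hr.ne']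
      exact fun x hx => closure_minimal hmx (isClosed_le continuous_const hφc) hx
    have h3 : 0 ≤ levyI1 N s g (fun x => φ t₀ x) r x₀ := by
      refine setIntegral_nonneg (measurableSet_normLe r) fun z (hz : ‖z‖ ≤ r) => ?_
      refine mul_nonneg ?_ (levyKernel_nonneg hs hg z)
      rw [h2]
      have := hmx' (x₀ + z) (by simpa using hz)
      simpa using this
    have h4 : levyI2 N s g (fun _ => c * t₀) r x₀ = 0 := by simp [levyI2]
    rw [h1, h4]
    linarith

/-! ### The cell problem -/

/-- The integer vector `k`, as a point of `ℝ^N`. -/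
noncomputable def intVec {N : ℕ} (k : Fin N → ℤ) : EN N :=
  (WithLp.equiv 2 (Fin N → ℝ)).symm (fun j => (k j : ℝ))

lemma exists_intVec_near {N : ℕ} (x : EN N) : ∃ k : Fin N → ℤ, ‖x - intVec k‖ ≤ N := by
  refine ⟨fun j => ⌊x j⌋, ?_⟩
  rw [EuclideanSpace.norm_eq, Real.sqrt_le_left (by positivity)]
  have h : ∀ i ∈ Finset.univ, ‖(x - intVec fun j => ⌊x j⌋) i‖ ^ 2 ≤ (1:ℝ) := fun i _ => by
    have e : (x - intVec fun j => ⌊x j⌋) i = Int.fract (x i) := rfl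
    rw [e, Real.norm_of_nonneg (Int.fract_nonneg _)]
    exact pow_le_one₀ (Int.fract_nonneg _) (Int.fract_lt_one _).le
  have h2 := Finset.sum_le_sum h
  simp only [Finset.sum_const, Finset.card_univ, Fintype.card_fin, nsmul_eq_mul, mul_one] at h2
  have h3 : (N:ℝ) ≤ (N:ℝ) ^ 2 := by exact_mod_cast Nat.le_self_pow (by norm_num) N
  linarith

/-- The properties of the nonlinearity `b = W'` and of `σ` used below: both are `K`-Lipschitz,
periodic, and bounded by `C`. Unlike (H2)-(H3) they are stated for `b` itself, so that they are
stable under the change `b ↦ -b(-·)`, `σ ↦ -σ`. -/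
structure CellData (N : ℕ) (b : ℝ → ℝ) (σ : ℝ → EN N → ℝ) (K C : ℝ) : Prop where
  K_nonneg : 0 ≤ K
  b_lip : ∀ u v, |b u - b v| ≤ K * |u - v|
  b_per : ∀ v, b (v + 1) = b v
  b_bdd : ∀ v, |b v| ≤ C
  σ_lip : ∀ t x τ y, |σ t x - σ τ y| ≤ K * (‖x - y‖ + |t - τ|)
  σ_time : ∀ t x, σ (t + 1) x = σ t x
  σ_space : ∀ (k : Fin N → ℤ) t x, σ t (x + intVec k) = σ t x
  σ_bdd : ∀ t x, |σ t x| ≤ C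

lemma CellData.b_int {N : ℕ} {b : ℝ → ℝ} {σ : ℝ → EN N → ℝ} {K C : ℝ}
    (h : CellData N b σ K C) (v : ℝ) (m : ℤ) : b (v + m) = b v := by
  have : Function.Periodic b 1 := h.b_per
  simpa using this.int_mul m v

lemma CellData.σ_nat {N : ℕ} {b : ℝ → ℝ} {σ : ℝ → EN N → ℝ} {K C : ℝ}
    (h : CellData N b σ K C) (t : ℝ) (x : EN N) (n : ℕ) : σ (t + n) x = σ t x := by
  have : Function.Periodic (fun t => σ t x) 1 := fun t => h.σ_time t x
  simpa using this.nat_mul n t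

lemma CellData.neg {N : ℕ} {b : ℝ → ℝ} {σ : ℝ → EN N → ℝ} {K C : ℝ}
    (h : CellData N b σ K C) : CellData N (fun v => -b (-v)) (fun t x => -σ t x) K C where
  K_nonneg := h.K_nonneg
  b_lip u v := by
    have := h.b_lip (-v) (-u)
    rwa [show -b (-u) - -b (-v) = b (-v) - b (-u) by ring, show u - v = -v - -u by ring]
  b_per v := by
    have := h.b_per (-(v + 1))
    rw [show -(v + 1) + 1 = -v by ring] at this
    simp only [this]
  b_bdd v := by simpa using h.b_bdd (-v)
  σ_lip t x τ y := by
    rw [neg_sub_neg, abs_sub_comm]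
    exact h.σ_lip t x τ y
  σ_time t x := by simp only [h.σ_time]
  σ_space k t x := by simp only [h.σ_space]
  σ_bdd t x := by simpa using h.σ_bdd t x

lemma exists_cellData {N : ℕ} {W : ℝ → ℝ} (hW : H2 W) {σ : ℝ → EN N → ℝ} (hσ : H3 N σ) :
    ∃ K C, CellData N (deriv W) σ K C := by
  obtain ⟨-, ⟨K₁, hK₁⟩, hWp⟩ := hW
  obtain ⟨⟨K₂, hK₂⟩, hσt, hσx⟩ := hσ
  set b := deriv W with hb
  have hbp : Function.Periodic b 1 := fun v => by
    have : (fun v => W (v + 1)) = W := funext hWp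
    rw [hb, ← deriv_comp_add_const (f := W), this]
  have hbl : ∀ u v, |b u - b v| ≤ K₁ * |u - v| := fun u v => by
    simpa [Real.dist_eq] using hK₁.dist_le_mul u v
  have hσl : ∀ t x τ y, |σ t x - σ τ y| ≤ K₂ * (‖x - y‖ + |t - τ|) := fun t x τ y => by
    have h1 := hK₂.dist_le_mul (t, x) (τ, y)
    rw [Real.dist_eq, Prod.dist_eq, Real.dist_eq, dist_eq_norm] at h1
    refine h1.trans (mul_le_mul_of_nonneg_left ?_ K₂.2)
    exact max_le (by linarith [norm_nonneg (x - y)]) (by linarith [abs_nonneg (t - τ)])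
  have hbb : ∀ v, |b v| ≤ |b 0| + K₁ := fun v => by
    have e : b v = b (Int.fract v) := by
      have := hbp.int_mul ⌊v⌋ (Int.fract v)
      rw [mul_one, Int.fract_add_floor] at this
      exact this
    have h1 := hbl (Int.fract v) 0
    rw [sub_zero, abs_of_nonneg (Int.fract_nonneg v), ← e] at h1
    have h2 : (K₁:ℝ) * Int.fract v ≤ K₁ := mul_le_of_le_one_right K₁.2 (Int.fract_lt_one v).le
    have h3 := abs_sub_abs_le_abs_sub (b v) (b 0)
    linarith
  have hσb : ∀ t x, |σ t x| ≤ |σ 0 0| + K₂ * (N + 1) := fun t x => by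
    obtain ⟨k, hk⟩ := exists_intVec_near x
    have e : σ t x = σ (Int.fract t) (x - intVec k) := by
      have h1 : σ (Int.fract t) x = σ t x := by
        have hp : Function.Periodic (fun t => σ t x) 1 := fun t => hσt t x
        have := hp.int_mul ⌊t⌋ (Int.fract t)
        rw [mul_one, Int.fract_add_floor] at this
        exact this.symm
      have h2 := hσx k (Int.fract t) (x - intVec k)
      rw [← h1, ← h2]
      exact congrArg _ (sub_add_cancel x (intVec k)).symm
    have h1 := hσl (Int.fract t) (x - intVec k) 0 0
    rw [sub_zero, sub_zero, abs_of_nonneg (Int.fract_nonneg t), ← e] at h1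
    have h2 : (K₂:ℝ) * (‖x - intVec k‖ + Int.fract t) ≤ K₂ * (N + 1) :=
      mul_le_mul_of_nonneg_left (by linarith [(Int.fract_lt_one t).le]) K₂.2
    have h3 := abs_sub_abs_le_abs_sub (σ t x) (σ 0 0)
    linarith
  refine ⟨max K₁ K₂, max (|b 0| + K₁) (|σ 0 0| + K₂ * (N + 1)), ?_⟩
  exact
    { K_nonneg := K₁.2.trans (le_max_left _ _)
      b_lip := fun u v => (hbl u v).trans
        (mul_le_mul_of_nonneg_right (le_max_left _ _) (abs_nonneg _))
      b_per := hbp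
      b_bdd := fun v => (hbb v).trans (le_max_left _ _)
      σ_lip := fun t x τ y => (hσl t x τ y).trans
        (mul_le_mul_of_nonneg_right (le_max_right _ _) (by positivity))
      σ_time := hσt
      σ_space := hσx
      σ_bdd := fun t x => (hσb t x).trans (le_max_right _ _) }

/-- The zeroth order part `L - b(v + p·y) + σ(t,y)` of the cell problem. -/
noncomputable def cellRHS {N : ℕ} (b : ℝ → ℝ) (σ : ℝ → EN N → ℝ) (p : EN N) (L : ℝ) :
    ℝ → EN N → ℝ → ℝ :=
  fun t y v => L - b (v + ⟪p, y⟫) + σ t y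

/-- `w` is a (continuous) viscosity solution of the cell problem, with no condition at time `0`. -/
def IsCell (N : ℕ) (s : ℝ) (g : EN N → ℝ) (b : ℝ → ℝ) (σ : ℝ → EN N → ℝ) (p : EN N) (L : ℝ)
    (w : ℝ → EN N → ℝ) : Prop :=
  SubS N s g (cellRHS b σ p L) w ∧ SubS N s g (negRHS (cellRHS b σ p L)) (fun t x => -w t x)

lemma isCell_of_isSol {N : ℕ} {s : ℝ} {g : EN N → ℝ} {W : ℝ → ℝ} {σ : ℝ → EN N → ℝ} {p : EN N}
    {L : ℝ} {w : ℝ → EN N → ℝ} (h : IsSol N s g (cellF N W σ p L) (fun _ => 0) w) :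
    IsCell N s g (deriv W) σ p L w ∧ ∀ x, w 0 x = 0 := by
  obtain ⟨hc, hsub, hsup⟩ := h
  have h0 : ∀ x, w 0 x = 0 := fun x => le_antisymm (hsub.2.2.1 x) (hsup.2.2.1 x)
  have hbd : ∀ T > 0, ∃ M, ∀ t ∈ Icc (0:ℝ) T, ∀ x, |w t x| ≤ M := fun T hT => by
    obtain ⟨M, hM⟩ := hsub.2.1 T hT
    refine ⟨max M 0, fun t ht x => ?_⟩
    rcases ht.1.eq_or_lt with h | h
    · rw [← h, h0, abs_zero]
      exact le_max_right _ _
    · exact (hM t ⟨h, ht.2⟩ x).trans (le_max_left _ _)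
  refine ⟨⟨⟨hc, hbd, ?_⟩, ⟨hc.neg, fun T hT => ?_, ?_⟩⟩, h0⟩
  · intro t₀ x₀ ht₀ φ hφ τ r hτ hτt hr hmax
    have := hsub.2.2.2 t₀ x₀ ht₀ φ hφ τ r hτ hτt hr hmax
    simp only [cellF] at this
    simp only [cellRHS]
    linarith
  · obtain ⟨M, hM⟩ := hbd T hT
    exact ⟨M, fun t ht x => by rw [abs_neg]; exact hM t ht x⟩
  · intro t₀ x₀ ht₀ φ hφ τ r hτ hτt hr hmax
    have := hsup.2.2.2 t₀ x₀ ht₀ (fun t x => -φ t x) hφ.neg τ r hτ hτt hr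
      (fun t x ht hx => by have := hmax t x ht hx; linarith)
    simp only [cellF] at this
    rw [levyI1_neg, deriv.fun_neg] at this
    rw [levyI2_neg]
    simp only [negRHS, cellRHS, neg_neg]
    linarith

lemma IsCell.shift {N : ℕ} {s : ℝ} {g : EN N → ℝ} {b : ℝ → ℝ} {σ : ℝ → EN N → ℝ} {K C : ℝ}
    (hd : CellData N b σ K C) {p : EN N} {L : ℝ} {w : ℝ → EN N → ℝ}
    (h : IsCell N s g b σ p L w) (n : ℕ) (k : Fin N → ℤ) (c : ℝ) (m : ℤ)
    (hm : ⟪p, intVec k⟫ - c = m) :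
    IsCell N s g b σ p L (fun t y => w (t + n) (y + intVec k) + c) := by
  have e : ∀ t y v, cellRHS b σ p L (t + n) (y + intVec k) (v - c) = cellRHS b σ p L t y v := by
    intro t y v
    simp only [cellRHS]
    rw [hd.σ_nat, hd.σ_space, inner_add_right,
      show v - c + (⟪p, y⟫ + ⟪p, intVec k⟫) = v + ⟪p, y⟫ + (⟪p, intVec k⟫ - c) by ring, hm, hd.b_int]
  constructor
  · have h1 := h.1.translate (Nat.cast_nonneg n) (intVec k) c
    simp only [e] at h1
    exact h1
  · have h1 := h.2.translate (Nat.cast_nonneg n) (intVec k) (-c)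
    have e2 : ∀ t y v, negRHS (cellRHS b σ p L) (t + n) (y + intVec k) (v - -c)
        = negRHS (cellRHS b σ p L) t y v := fun t y v => by
      simp only [negRHS]
      rw [← e t y (-v)]
      congr 2
      ring
    simp only [e2] at h1
    convert h1 using 3
    ring

lemma IsCell.reflect {N : ℕ} {s : ℝ} {g : EN N → ℝ} (hg : H1 N g) {b : ℝ → ℝ}
    {σ : ℝ → EN N → ℝ} {p : EN N} {L : ℝ} {w : ℝ → EN N → ℝ} (h : IsCell N s g b σ p L w) :
    IsCell N s g b (fun t y => σ t (-y)) (-p) L (fun t y => w t (-y)) := by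
  have e : cellRHS b (fun t y => σ t (-y)) (-p) L = fun t y v => cellRHS b σ p L t (-y) v := by
    ext t y v
    simp [cellRHS]
  constructor
  · rw [e]
    exact h.1.reflect hg
  · rw [e]
    exact h.2.reflect hg

lemma IsCell.neg {N : ℕ} {s : ℝ} {g : EN N → ℝ} {b : ℝ → ℝ} {σ : ℝ → EN N → ℝ} {p : EN N}
    {L : ℝ} {w : ℝ → EN N → ℝ} (h : IsCell N s g b σ p L w) :
    IsCell N s g (fun v => -b (-v)) (fun t y => -σ t y) (-p) (-L) (fun t y => -w t y) := by
  have e : cellRHS (fun v => -b (-v)) (fun t y => -σ t y) (-p) (-L) = negRHS (cellRHS b σ p L) := by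
    ext t y v
    simp only [cellRHS, negRHS, inner_neg_left]
    rw [show -(v + -⟪p, y⟫) = -v + ⟪p, y⟫ by ring]
    ring
  constructor
  · rw [e]
    exact h.2
  · rw [e]
    have e2 : negRHS (negRHS (cellRHS b σ p L)) = cellRHS b σ p L := by
      ext t y v
      simp [negRHS]
    rw [e2]
    simpa using h.1

lemma CellData.abs_cellRHS_le {N : ℕ} {b : ℝ → ℝ} {σ : ℝ → EN N → ℝ} {K C : ℝ}
    (hd : CellData N b σ K C) (p : EN N) (L t : ℝ) (x : EN N) (v : ℝ) :
    |cellRHS b σ p L t x v| ≤ |L| + 2 * C := by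
  have h1 := abs_le.1 (hd.b_bdd (v + ⟪p, x⟫))
  have h2 := abs_le.1 (hd.σ_bdd t x)
  have h3 := abs_le.1 (le_refl |L|)
  simp only [cellRHS]
  rw [abs_le]
  constructor <;> linarith [h1.1, h1.2, h2.1, h2.2, h3.1, h3.2]

/-- The structure condition on two cell problems needed for their comparison; `e` bounds the
effect of the change of `p` and `L`. -/
lemma CellData.cellRHS_sub_le {N : ℕ} {b : ℝ → ℝ} {σ : ℝ → EN N → ℝ} {K C : ℝ}
    (hd : CellData N b σ K C) {p p' : EN N} {L L' t : ℝ} {x : EN N} {τ : ℝ} {y : EN N} {v₁ v₂ e : ℝ}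
    (he : L' - L + (b (v₁ + ⟪p, x⟫) - b (v₁ + ⟪p', x⟫)) ≤ e) :
    cellRHS b σ p' L' t x v₁ - cellRHS b σ p L τ y v₂
      ≤ K * |v₁ - v₂| + (K * ‖p‖ + K) * (‖x - y‖ + |t - τ|) + e := by
  have hK := hd.K_nonneg
  have h1 := (le_abs_self _).trans (hd.b_lip (v₂ + ⟪p, y⟫) (v₁ + ⟪p, x⟫))
  have h2 := (le_abs_self _).trans (hd.σ_lip t x τ y)
  have h3 : |v₂ + ⟪p, y⟫ - (v₁ + ⟪p, x⟫)| ≤ |v₁ - v₂| + ‖p‖ * ‖x - y‖ := by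
    rw [show v₂ + ⟪p, y⟫ - (v₁ + ⟪p, x⟫) = -(v₁ - v₂) + -⟪p, x - y⟫ by rw [inner_sub_right]; ring]
    refine (abs_add_le _ _).trans ?_
    rw [abs_neg, abs_neg]
    gcongr
    exact abs_real_inner_le_norm _ _
  have h4 := mul_le_mul_of_nonneg_left h3 hK
  have h5 : 0 ≤ K * ‖p‖ * |t - τ| := by positivity
  simp only [cellRHS]
  nlinarith

lemma IsCell.le {N : ℕ} (hN : 1 ≤ N) {s : ℝ} (hs : s ∈ Ioo (0:ℝ) 1) {g : EN N → ℝ} (hg : H1 N g)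
    {b : ℝ → ℝ} {σ : ℝ → EN N → ℝ} {K C : ℝ} (hd : CellData N b σ K C) {p : EN N} {L₁ L₂ : ℝ}
    {w₁ w₂ : ℝ → EN N → ℝ} (h₁ : IsCell N s g b σ p L₁ w₁) (h₂ : IsCell N s g b σ p L₂ w₂)
    (hL : L₁ ≤ L₂) (h0 : ∀ x, w₁ 0 x ≤ w₂ 0 x) {t : ℝ} (ht : 0 ≤ t) (x : EN N) :
    w₁ t x ≤ w₂ t x := by
  have hK := hd.K_nonneg
  refine comparison_le hN hs hg hK (C := K * ‖p‖ + K) (by positivity) (fun t x τ y v₁ v₂ => ?_)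
    (fun t x v => hd.abs_cellRHS_le p L₂ t x v) h₁.1 h₂.2 h0 ht x
  have := hd.cellRHS_sub_le (p := p) (p' := p) (L := L₂) (L' := L₁) (t := t) (x := x) (τ := τ)
    (y := y) (v₁ := v₁) (v₂ := v₂) (e := 0) (by linarith)
  linarith

/-- The cell problem is invariant under integer translations up to integer constants, hence a
solution starting from `0` oscillates by at most `1` under such translations. -/
lemma IsCell.add_intVec_le {N : ℕ} (hN : 1 ≤ N) {s : ℝ} (hs : s ∈ Ioo (0:ℝ) 1) {g : EN N → ℝ}
    (hg : H1 N g) {b : ℝ → ℝ} {σ : ℝ → EN N → ℝ} {K C : ℝ} (hd : CellData N b σ K C) {p : EN N}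
    {L : ℝ} {w : ℝ → EN N → ℝ} (h : IsCell N s g b σ p L w) (h0 : ∀ x, w 0 x = 0) {t : ℝ}
    (ht : 0 ≤ t) (y : EN N) (k : Fin N → ℤ) : w t (y + intVec k) ≤ w t y + 1 := by
  have h1 := h.shift hd 0 k (⟪p, intVec k⟫ - ⌈⟪p, intVec k⟫⌉) ⌈⟪p, intVec k⟫⌉ (by ring)
  have h2 := h1.le hN hs hg hd h le_rfl (fun x => by
    simp only [Nat.cast_zero, add_zero, h0]
    linarith [Int.le_ceil ⟪p, intVec k⟫]) ht y
  simp only [Nat.cast_zero, add_zero] at h2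
  linarith [Int.ceil_lt_add_one ⟪p, intVec k⟫]

lemma SlopeLim.le {N : ℕ} {w₁ w₂ : ℝ → EN N → ℝ} {l₁ l₂ : ℝ} (h₁ : SlopeLim N w₁ l₁)
    (h₂ : SlopeLim N w₂ l₂) (h : ∀ t, 0 ≤ t → w₁ t 0 ≤ w₂ t 0) : l₁ ≤ l₂ := by
  refine le_of_forall_pos_le_add fun ε hε => ?_
  obtain ⟨T₁, hT₁⟩ := h₁ (ε / 2) (by linarith) 1 one_pos
  obtain ⟨T₂, hT₂⟩ := h₂ (ε / 2) (by linarith) 1 one_pos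
  set T := max (max T₁ T₂) 0
  have hT : 0 ≤ T := le_max_right _ _
  have e1 := abs_le.1 (hT₁ T ((le_max_left _ _).trans (le_max_left _ _)) 0 (by simp))
  have e2 := abs_le.1 (hT₂ T ((le_max_right _ _).trans (le_max_left _ _)) 0 (by simp))
  have e3 := div_le_div_of_nonneg_right (h T hT) hT
  linarith [e1.1, e2.2]

lemma slopeLim_linear {N : ℕ} (c : ℝ) : SlopeLim N (fun t _ => c * t) c := fun ε hε R _ =>
  ⟨1, fun τ hτ y _ => by
    rw [mul_div_cancel_right₀ _ (by linarith : τ ≠ 0), sub_self, abs_zero]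
    exact hε.le⟩

lemma SlopeLim.neg {N : ℕ} {w : ℝ → EN N → ℝ} {l : ℝ} (h : SlopeLim N w l) :
    SlopeLim N (fun t y => -w t y) (-l) := fun ε hε R hR => by
  obtain ⟨T, hT⟩ := h ε hε R hR
  refine ⟨T, fun τ hτ y hy => ?_⟩
  rw [neg_div, neg_sub_neg, abs_sub_comm]
  exact hT τ hτ y hy

lemma SlopeLim.reflect {N : ℕ} {w : ℝ → EN N → ℝ} {l : ℝ} (h : SlopeLim N w l) :
    SlopeLim N (fun t y => w t (-y)) l := fun ε hε R hR => by
  obtain ⟨T, hT⟩ := h ε hε R hR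
  exact ⟨T, fun τ hτ y hy => hT τ hτ (-y) (by rwa [norm_neg])⟩

/-! ### The effective Hamiltonian -/

/-- `Hbar p L` is the asymptotic slope of a solution of the cell problem with zero datum. -/
def IsEffective (N : ℕ) (s : ℝ) (g : EN N → ℝ) (b : ℝ → ℝ) (σ : ℝ → EN N → ℝ)
    (Hbar : EN N → ℝ → ℝ) : Prop :=
  ∀ p L, ∃ w, IsCell N s g b σ p L w ∧ (∀ x, w 0 x = 0) ∧ SlopeLim N w (Hbar p L)

lemma IsEffective.neg {N : ℕ} {s : ℝ} {g : EN N → ℝ} {b : ℝ → ℝ} {σ : ℝ → EN N → ℝ}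
    {Hbar : EN N → ℝ → ℝ} (h : IsEffective N s g b σ Hbar) :
    IsEffective N s g (fun v => -b (-v)) (fun t x => -σ t x) (fun p L => -Hbar (-p) (-L)) := by
  intro p L
  obtain ⟨w, h1, h2, h3⟩ := h (-p) (-L)
  refine ⟨fun t y => -w t y, ?_, fun x => by simp [h2], h3.neg⟩
  simpa using h1.neg

lemma IsEffective.mono {N : ℕ} (hN : 1 ≤ N) {s : ℝ} (hs : s ∈ Ioo (0:ℝ) 1) {g : EN N → ℝ}
    (hg : H1 N g) {b : ℝ → ℝ} {σ : ℝ → EN N → ℝ} {K C : ℝ} (hd : CellData N b σ K C)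
    {Hbar : EN N → ℝ → ℝ} (h : IsEffective N s g b σ Hbar) (p : EN N) : Monotone (Hbar p) := by
  intro L₁ L₂ hL
  obtain ⟨w₁, h1, h10, h1s⟩ := h p L₁
  obtain ⟨w₂, h2, h20, h2s⟩ := h p L₂
  exact h1s.le h2s fun t ht => h1.le hN hs hg hd h2 hL (fun x => by rw [h10, h20]) ht 0

/-- Uniqueness of the asymptotic slope. -/
lemma IsEffective.eq_of_isCell {N : ℕ} (hN : 1 ≤ N) {s : ℝ} (hs : s ∈ Ioo (0:ℝ) 1) {g : EN N → ℝ}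
    (hg : H1 N g) {b : ℝ → ℝ} {σ : ℝ → EN N → ℝ} {K C : ℝ} (hd : CellData N b σ K C)
    {Hbar : EN N → ℝ → ℝ} (h : IsEffective N s g b σ Hbar) {p : EN N} {L l : ℝ}
    {w : ℝ → EN N → ℝ} (hw : IsCell N s g b σ p L w) (hw0 : ∀ x, w 0 x = 0)
    (hws : SlopeLim N w l) : Hbar p L = l := by
  obtain ⟨w₁, h1, h10, h1s⟩ := h p L
  apply le_antisymm
  · exact h1s.le hws fun t ht => h1.le hN hs hg hd hw le_rfl (fun x => by rw [h10, hw0]) ht 0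
  · exact hws.le h1s fun t ht => hw.le hN hs hg hd h1 le_rfl (fun x => by rw [h10, hw0]) ht 0

/-- The function `(L - 2C) t` is a subsolution of the cell problem. -/
lemma IsEffective.lower_bound {N : ℕ} (hN : 1 ≤ N) {s : ℝ} (hs : s ∈ Ioo (0:ℝ) 1) {g : EN N → ℝ}
    (hg : H1 N g) {b : ℝ → ℝ} {σ : ℝ → EN N → ℝ} {K C : ℝ} (hd : CellData N b σ K C)
    {Hbar : EN N → ℝ → ℝ} (h : IsEffective N s g b σ Hbar) (p : EN N) (L : ℝ) :
    L - 2 * C ≤ Hbar p L := by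
  obtain ⟨w, h1, h10, h1s⟩ := h p L
  refine (slopeLim_linear (L - 2 * C)).le h1s fun t ht => ?_
  refine comparison_le hN hs hg le_rfl le_rfl (K := 0) (C := 0) (fun t x τ y v₁ v₂ => ?_)
    (fun t x v => hd.abs_cellRHS_le p L t x v) (subS_linear hs hg (L - 2 * C)) h1.2
    (fun x => by rw [h10, mul_zero]) ht 0
  have e1 := (le_abs_self _).trans (hd.b_bdd (v₂ + ⟪p, y⟫))
  have e2 := (neg_abs_le (σ τ y)).trans' (neg_le_neg (hd.σ_bdd τ y))
  simp only [cellRHS]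
  linarith

/-- Upper semicontinuity. On a finite time interval `[0, T]` the solution depends continuously on
`(p, L)`, locally uniformly in space; periodicity turns the resulting bound `w'(T, ·) ≤ n` on a
unit cell into a global one, and iterating it in time bounds the slope by `n / T`. -/
lemma IsEffective.upper {N : ℕ} (hN : 1 ≤ N) {s : ℝ} (hs : s ∈ Ioo (0:ℝ) 1) {g : EN N → ℝ}
    (hg : H1 N g) {b : ℝ → ℝ} {σ : ℝ → EN N → ℝ} {K C : ℝ} (hd : CellData N b σ K C)
    {Hbar : EN N → ℝ → ℝ} (h : IsEffective N s g b σ Hbar) (p : EN N) (L : ℝ) {ε : ℝ}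
    (hε : 0 < ε) : ∃ δ > 0, ∀ p' L', ‖p' - p‖ ≤ δ → |L' - L| ≤ δ →
      Hbar p' L' ≤ Hbar p L + ε := by
  have hK := hd.K_nonneg
  have hNpos : (0:ℝ) < N := by exact_mod_cast hN
  obtain ⟨w, hw, hw0, hws⟩ := h p L
  set l := Hbar p L with hl
  set e := ε / 2 with he
  have he0 : 0 < e := by positivity
  obtain ⟨T₀, hT₀⟩ := hws e he0 N hNpos
  obtain ⟨n₁, hn₁⟩ := exists_nat_ge (max T₀ ((e + 2) / e))
  set T : ℕ := n₁ + 1 with hTdef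
  have hTpos : (0:ℝ) < T := by positivity
  have hT1 : T₀ ≤ T := by
    rw [hTdef]; push_cast
    linarith [le_max_left T₀ ((e + 2) / e)]
  have hT2 : (e + 2) / T ≤ e := by
    have : (e + 2) / e ≤ T := by
      rw [hTdef]; push_cast
      linarith [le_max_right T₀ ((e + 2) / e)]
    rw [div_le_iff₀ he0] at this
    rw [div_le_iff₀ hTpos]
    linarith
  have hwT : ∀ y : EN N, ‖y‖ ≤ N → w T y ≤ (l + e) * T := fun y hy => by
    have h1 := (abs_le.1 (hT₀ T hT1 y hy)).2
    rw [← div_le_iff₀ hTpos]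
    linarith
  set E := Real.exp ((K + weightConst N s g + 1) * T) with hE
  have hE0 : 0 < E := Real.exp_pos _
  set lw := 1 + Real.log (1 + (N:ℝ) ^ 2) with hlw
  have hlw0 : 0 < lw := by
    have := Real.log_nonneg (show (1:ℝ) ≤ 1 + (N:ℝ) ^ 2 by nlinarith)
    linarith
  set η := e / (E * lw) with hη
  have hη0 : 0 < η := by positivity
  obtain ⟨R, hR, hRlog⟩ := exists_lt_logWeight N (4 * C / η)
  set δ := min (η / 2) (η / (2 * (K * R + 1))) with hδ
  have hKR : 0 < K * R + 1 := by positivity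
  have hδ0 : 0 < δ := by positivity
  refine ⟨δ, hδ0, fun p' L' hp hL => ?_⟩
  obtain ⟨w', hw', hw'0, hw's⟩ := h p' L'
  have hcomp : ∀ y : EN N, ‖y‖ ≤ N → w' T y ≤ (l + e) * T + e := fun y hy => by
    have h1 := comparison hN hs hg hK (C := K * ‖p‖ + K) (by positivity) hη0
      (fun t x τ y v₁ v₂ => hd.cellRHS_sub_le (p := p) (p' := p') (L := L) (L' := L')
        (e := η * logWeight x) ?_)
      (fun t x v => hd.abs_cellRHS_le p L t x v) hw'.1 hw.2 (fun x => by rw [hw'0, hw0]) hTpos.le y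
    · rw [← hE] at h1
      have h2 : E * (η * logWeight y) ≤ E * (η * lw) := by
        have := logWeight_le hy
        gcongr
      have h3 : E * (η * lw) = e := by rw [hη]; field_simp
      linarith [hwT y hy]
    · have h1 : L' - L ≤ η / 2 := (le_abs_self _).trans (hL.trans (min_le_left _ _))
      have h2 : b (v₁ + ⟪p, x⟫) - b (v₁ + ⟪p', x⟫) ≤ η / 2 * logWeight x := by
        by_cases hx : ‖x‖ ≤ R
        · have h3 := (le_abs_self _).trans (hd.b_lip (v₁ + ⟪p, x⟫) (v₁ + ⟪p', x⟫))
          have h4 : |v₁ + ⟪p, x⟫ - (v₁ + ⟪p', x⟫)| ≤ δ * R := by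
            rw [add_sub_add_left_eq_sub, ← inner_sub_left]
            refine (abs_real_inner_le_norm _ _).trans ?_
            rw [norm_sub_rev]
            gcongr
          have h5 : K * (δ * R) ≤ η / 2 := by
            have h6 : δ * (2 * (K * R + 1)) ≤ η := by
              rw [← le_div_iff₀ (by positivity)]
              exact min_le_right _ _
            nlinarith
          have h7 := mul_le_mul_of_nonneg_left h4 hK
          nlinarith [one_le_logWeight x]
        · have h3 := hRlog x (not_le.1 hx)
          rw [div_lt_iff₀ hη0] at h3
          have h4 := abs_le.1 (hd.b_bdd (v₁ + ⟪p, x⟫))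
          have h5 := abs_le.1 (hd.b_bdd (v₁ + ⟪p', x⟫))
          linarith [h4.2, h5.1]
      nlinarith [one_le_logWeight x]
  obtain ⟨n, hn1, hn2⟩ : ∃ n : ℤ, (l + e) * T + e + 1 ≤ n ∧ (n:ℝ) ≤ (l + e) * T + e + 2 :=
    ⟨⌈(l + e) * T + e + 1⌉, Int.le_ceil _, by
      linarith [(Int.ceil_lt_add_one ((l + e) * T + e + 1)).le]⟩
  have hglob : ∀ y, w' T y ≤ n := fun y => by
    obtain ⟨k, hk⟩ := exists_intVec_near y
    have h1 := hw'.add_intVec_le hN hs hg hd hw'0 hTpos.le (y - intVec k) k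
    rw [sub_add_cancel] at h1
    linarith [hcomp _ hk]
  have hz : intVec (0 : Fin N → ℤ) = 0 := by
    ext i
    simp [intVec]
  have hstep : ∀ t, 0 ≤ t → w' (t + T) 0 ≤ w' t 0 + n := fun t ht => by
    have h1 := hw'.shift hd T 0 (-n) n (by rw [hz, inner_zero_right]; ring)
    have h2 := h1.le hN hs hg hd hw' le_rfl (fun x => by
      rw [hz, zero_add, add_zero, hw'0]
      linarith [hglob x]) ht 0
    rw [hz, add_zero] at h2
    linarith
  have hiter : ∀ j : ℕ, w' (j * T) 0 ≤ j * n := fun j => by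
    induction j with
    | zero => simp [hw'0]
    | succ j ih =>
      have := hstep (j * T) (by positivity)
      push_cast
      rw [add_mul, one_mul, add_mul, one_mul]
      linarith
  have hslope : Hbar p' L' ≤ n / T := by
    refine le_of_forall_pos_le_add fun ε' hε' => ?_
    obtain ⟨T₁, hT₁⟩ := hw's ε' hε' 1 one_pos
    obtain ⟨j, hj⟩ := exists_nat_ge (max T₁ 1)
    have hj1 : (1:ℝ) ≤ j := (le_max_right _ _).trans hj
    have hT1' : (1:ℝ) ≤ T := by rw [hTdef]; push_cast; linarith [Nat.cast_nonneg (α := ℝ) n₁]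
    have hjT : T₁ ≤ j * T := by nlinarith [(le_max_left T₁ 1).trans hj]
    have h1 := (abs_le.1 (hT₁ (j * T) hjT 0 (by simp))).1
    have h2 : w' (j * T) 0 / (j * T) ≤ n / T := by
      rw [div_le_div_iff₀ (by positivity) hTpos]
      nlinarith [hiter j]
    linarith
  have hfin : (n:ℝ) / T ≤ l + e + (e + 2) / T := by
    rw [div_le_iff₀ hTpos, add_mul, div_mul_cancel₀ _ hTpos.ne']
    linarith
  linarith

lemma IsEffective.continuous {N : ℕ} (hN : 1 ≤ N) {s : ℝ} (hs : s ∈ Ioo (0:ℝ) 1) {g : EN N → ℝ}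
    (hg : H1 N g) {b : ℝ → ℝ} {σ : ℝ → EN N → ℝ} {K C : ℝ} (hd : CellData N b σ K C)
    {Hbar : EN N → ℝ → ℝ} (h : IsEffective N s g b σ Hbar) :
    Continuous (fun q : EN N × ℝ => Hbar q.1 q.2) := by
  rw [Metric.continuous_iff]
  rintro ⟨p, L⟩ ε hε
  obtain ⟨δ₁, hδ₁, h₁⟩ := h.upper hN hs hg hd p L (half_pos hε)
  obtain ⟨δ₂, hδ₂, h₂⟩ := h.neg.upper hN hs hg hd.neg (-p) (-L) (half_pos hε)
  refine ⟨min δ₁ δ₂, lt_min hδ₁ hδ₂, ?_⟩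
  rintro ⟨p', L'⟩ hq
  rw [Prod.dist_eq, max_lt_iff, dist_eq_norm, Real.dist_eq] at hq
  have e1 := h₁ p' L' (hq.1.le.trans (min_le_left _ _)) (hq.2.le.trans (min_le_left _ _))
  have e2 := h₂ (-p') (-L')
    (by rw [← norm_neg, show -(-p' - -p) = p' - p by abel]; exact hq.1.le.trans (min_le_right _ _))
    (by rw [← abs_neg, show -(-L' - -L) = L' - L by ring]; exact hq.2.le.trans (min_le_right _ _))
  simp only [neg_neg] at e2
  rw [Real.dist_eq, abs_lt]
  constructor <;> simp only <;> linarith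

/-- **Properties of the effective Hamiltonian (Proposition 3.2).** Under (H1)–(H4), `H̄` is
continuous and: (i) `H̄(p,L) → ±∞` as `L → ±∞`; (ii) `H̄(p,·)` is nondecreasing;
(iii) if `σ` is even in `y`, then `H̄(p,L) = H̄(−p,L)`;
(iv) if `W'` is odd and `σ` is odd in `y`, then `H̄(p,−L) = −H̄(p,L)`. -/
theorem effective_hamiltonian_properties
    (N : ℕ) (hN : 1 ≤ N) (s : ℝ) (hs : s ∈ Set.Ioo (0:ℝ) 1)
    (g : EN N → ℝ) (hg : H1 N g)
    (W : ℝ → ℝ) (hW : H2 W)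
    (σ : ℝ → EN N → ℝ) (hσ : H3 N σ)
    (u₀ : EN N → ℝ) (hu₀ : H4 N u₀)
    -- `H̄` is the effective Hamiltonian given by the ergodicity theorem:
    (Hbar : EN N → ℝ → ℝ)
    (hHbar : ∀ (p : EN N) (L : ℝ), ∃ w : ℝ → EN N → ℝ,
      IsSol N s g (cellF N W σ p L) (fun _ => 0) w ∧ SlopeLim N w (Hbar p L)) :
    Continuous (fun q : EN N × ℝ => Hbar q.1 q.2) ∧
    (∀ p : EN N, Tendsto (Hbar p) atTop atTop) ∧
    (∀ p : EN N, Tendsto (Hbar p) atBot atBot) ∧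
    (∀ p : EN N, Monotone (Hbar p)) ∧
    ((∀ (τ : ℝ) (y : EN N), σ τ (-y) = σ τ y) →
      ∀ (p : EN N) (L : ℝ), Hbar p L = Hbar (-p) L) ∧
    ((∀ v : ℝ, deriv W (-v) = -deriv W v) →
      (∀ (τ : ℝ) (y : EN N), σ τ (-y) = -σ τ y) →
      ∀ (p : EN N) (L : ℝ), Hbar p (-L) = -Hbar p L) := by
  obtain ⟨K, C, hd⟩ := exists_cellData hW hσ
  have hE : IsEffective N s g (deriv W) σ Hbar := fun p L => by
    obtain ⟨w, hw, hws⟩ := hHbar p L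
    obtain ⟨h1, h2⟩ := isCell_of_isSol hw
    exact ⟨w, h1, h2, hws⟩
  have hlow := hE.lower_bound hN hs hg hd
  have hup : ∀ p L, Hbar p L ≤ L + 2 * C := fun p L => by
    have := hE.neg.lower_bound hN hs hg hd.neg (-p) (-L)
    simp only [neg_neg] at this
    linarith
  refine ⟨hE.continuous hN hs hg hd, fun p => ?_, fun p => ?_, hE.mono hN hs hg hd, ?_, ?_⟩
  · exact tendsto_atTop_mono (hlow p) (tendsto_atTop_add_const_right _ (-(2 * C)) tendsto_id)
  · exact tendsto_atBot_mono (hup p) (tendsto_atBot_add_const_right _ (2 * C) tendsto_id)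
  · intro hσe p L
    obtain ⟨w, h1, h2, h3⟩ := hE (-p) L
    have h4 := h1.reflect hg
    simp only [hσe, neg_neg] at h4
    exact hE.eq_of_isCell hN hs hg hd h4 (fun x => h2 (-x)) h3.reflect
  · intro hb hσo p L
    obtain ⟨w, h1, h2, h3⟩ := hE p L
    have h4 := (h1.reflect hg).neg
    simp only [hσo, hb, neg_neg] at h4
    exact hE.eq_of_isCell hN hs hg hd h4 (fun x => by rw [h2, neg_zero]) h3.reflect.neg
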